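/- arXiv:2304.02500 — 9 statements merged into one kernel-verified Lean document; each statement's English description precedes it below -/
import Mathlib

section
/- Let r > 0, η > 0, s ∈ ℝ^K, and p = q_r(s). Then for a vector p̃ ∈ P with all components strictly positive, p̃ = q_r(s + η · c(p)) if and only if for every w ∈ W and every p' ∈ P, ∑_{k ∈ K_w} (log p_k − log p̃_k)(p'_k − p̃_k) ≤ r η · ∑_{k ∈ K_w} c_k(p)(p'_k − p̃_k). -/
open Finset Filter Topology

theorem stmt_4
    {W K E : Type*} [Fintype W] [Fintype K] [Fintype E]
    [DecidableEq W] [DecidableEq E]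
    [Nonempty W] [Nonempty K]
    (ω : K → W) (hω : Function.Surjective ω)
    (Λ : E → K → ℝ) (hΛ : ∀ e k, Λ e k = 0 ∨ Λ e k = 1)
    (d : W → ℝ) (hd : ∀ w, 0 < d w)
    (u : (E → ℝ) → (E → ℝ))
    (P : Set (K → ℝ))
    (hP : P = {p : K → ℝ | (∀ k, 0 ≤ p k) ∧
      ∀ w, ∑ k ∈ Finset.univ.filter (fun k => ω k = w), p k = 1})
    (Λbar : E → K → ℝ) (hΛbar : ∀ e k, Λbar e k = d (ω k) * Λ e k)
    (c : (K → ℝ) → K → ℝ)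
    (hc : ∀ p k, c p k = ∑ e, Λ e k * u (fun e' => ∑ k', Λbar e' k' * p k') e)
    (q : ℝ → (K → ℝ) → K → ℝ)
    (hq : ∀ (rr : ℝ) (ss : K → ℝ) (k : K),
      q rr ss k = Real.exp (-rr * ss k) /
        ∑ k' ∈ Finset.univ.filter (fun k' => ω k' = ω k), Real.exp (-rr * ss k'))
    (r : ℝ) (hr : 0 < r) (η : ℝ) (hη : 0 < η)
    (sv : K → ℝ) (pv : K → ℝ) (hpv : pv = q r sv)
    (ptil : K → ℝ) (hptil : ptil ∈ P) (hpos : ∀ k, 0 < ptil k) :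
    ptil = q r (fun k => sv k + η * c pv k) ↔
      ∀ w : W, ∀ pp ∈ P,
        ∑ k ∈ Finset.univ.filter (fun k => ω k = w),
            (Real.log (pv k) - Real.log (ptil k)) * (pp k - ptil k)
          ≤ r * η * ∑ k ∈ Finset.univ.filter (fun k => ω k = w), c pv k * (pp k - ptil k) := by
  have hZ : ∀ (ss : K → ℝ) (k : K),
      0 < ∑ k' ∈ Finset.univ.filter (fun k' => ω k' = ω k), Real.exp (-r * ss k') := by
    intro ss k
    exact Finset.sum_pos (fun _ _ => Real.exp_pos _) ⟨k, by simp⟩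
  have hlog : ∀ (ss : K → ℝ) (k : K), Real.log (q r ss k) = -r * ss k -
      Real.log (∑ k' ∈ Finset.univ.filter (fun k' => ω k' = ω k), Real.exp (-r * ss k')) := by
    intro ss k
    rw [hq, Real.log_div (Real.exp_pos _).ne' (hZ ss k).ne', Real.log_exp]
  have hqpos : ∀ (ss : K → ℝ) (k : K), 0 < q r ss k := by
    intro ss k
    rw [hq]
    exact div_pos (Real.exp_pos _) (hZ ss k)
  have hqP : ∀ ss : K → ℝ, q r ss ∈ P := by
    intro ss
    rw [hP]
    refine ⟨fun k => (hqpos ss k).le, fun w => ?_⟩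
    obtain ⟨k0, rfl⟩ := hω w
    rw [← div_self (hZ ss k0).ne', Finset.sum_div]
    refine Finset.sum_congr rfl fun k hk => ?_
    have hk' : ω k = ω k0 := by simpa using hk
    rw [hq, hk']
  have hsum : ∀ pp ∈ P, ∀ w, ∑ k ∈ Finset.univ.filter (fun k => ω k = w), pp k = 1 := by
    intro pp hpp
    rw [hP] at hpp
    exact hpp.2
  set qs := q r (fun k => sv k + η * c pv k) with hqs
  have key : ∀ w : W, ∀ pp ∈ P,
      ∑ k ∈ Finset.univ.filter (fun k => ω k = w),
            (Real.log (pv k) - Real.log (ptil k)) * (pp k - ptil k)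
          - r * η * ∑ k ∈ Finset.univ.filter (fun k => ω k = w), c pv k * (pp k - ptil k)
        = ∑ k ∈ Finset.univ.filter (fun k => ω k = w),
            (Real.log (qs k) - Real.log (ptil k)) * (pp k - ptil k) := by
    intro w pp hpp
    obtain ⟨C, hC⟩ : ∃ C : ℝ, ∀ k ∈ Finset.univ.filter (fun k => ω k = w),
        Real.log (pv k) - r * η * c pv k = Real.log (qs k) + C := by
      refine ⟨Real.log (∑ k' ∈ Finset.univ.filter (fun k' => ω k' = w),
          Real.exp (-r * (sv k' + η * c pv k'))) -
        Real.log (∑ k' ∈ Finset.univ.filter (fun k' => ω k' = w), Real.exp (-r * sv k')), ?_⟩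
      intro k hk
      have hk' : ω k = w := by simpa using hk
      have h1 := hlog sv k
      rw [← hpv] at h1
      have h2 := hlog (fun k => sv k + η * c pv k) k
      rw [← hqs] at h2
      rw [h2, h1, hk']
      ring
    have h0 : ∑ k ∈ Finset.univ.filter (fun k => ω k = w), C * (pp k - ptil k) = 0 := by
      rw [← Finset.mul_sum, Finset.sum_sub_distrib, hsum pp hpp, hsum ptil hptil]
      ring
    rw [← add_zero (∑ k ∈ Finset.univ.filter (fun k => ω k = w),
            (Real.log (qs k) - Real.log (ptil k)) * (pp k - ptil k)), ← h0,
      ← Finset.sum_add_distrib, Finset.mul_sum, ← Finset.sum_sub_distrib]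
    refine Finset.sum_congr rfl fun k hk => ?_
    linear_combination (pp k - ptil k) * hC k hk
  constructor
  · intro h w pp hpp
    have := key w pp hpp
    rw [← h] at this
    simp only [sub_self, zero_mul, Finset.sum_const_zero] at this
    linarith
  · intro h
    have hnn : ∀ k, 0 ≤ (Real.log (qs k) - Real.log (ptil k)) * (qs k - ptil k) := by
      intro k
      rcases le_total (qs k) (ptil k) with hle | hle
      · exact mul_nonneg_of_nonpos_of_nonpos
          (sub_nonpos.2 (Real.log_le_log (hqpos _ k) hle)) (sub_nonpos.2 hle)
      · exact mul_nonneg (sub_nonneg.2 (Real.log_le_log (hpos k) hle)) (sub_nonneg.2 hle)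
    funext k
    have h1 := key (ω k) qs (hqP _)
    have h2 := h (ω k) qs (hqP _)
    have h3 := Finset.single_le_sum (f := fun k =>
      (Real.log (qs k) - Real.log (ptil k)) * (qs k - ptil k))
      (s := Finset.univ.filter (fun k' => ω k' = ω k)) (fun i _ => hnn i)
      (Finset.mem_filter.2 ⟨Finset.mem_univ k, rfl⟩)
    have h4 : (Real.log (qs k) - Real.log (ptil k)) * (qs k - ptil k) = 0 :=
      le_antisymm (by linarith) (hnn k)
    rcases mul_eq_zero.1 h4 with h5 | h5
    · exact (Real.log_injOn_pos (hqpos _ k) (hpos k) (sub_eq_zero.1 h5)).symm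
    · linarith
end

section
/- In the CumLog dynamics with finite initial valuation s^0 ∈ ℝ^K, for every p* ∈ P* and every t ≥ 0, D(p*, p^{t+1}) ≤ D(p*, p^t) − (1/2) · ‖p^t − p^{t+1}‖₂² + r η^t · ⟨c(p^t), p* − p^{t+1}⟩. -/
open Finset Filter Topology

theorem aux_scalar {a b : ℝ} (ha : 0 < a) (hb : 0 < b) (ha1 : a ≤ 1) (hb1 : b ≤ 1) :
    (a - b) ^ 2 / 2 ≤ a * (Real.log a - Real.log b) - a + b := by
  rcases le_total b a with h | h
  · have hx : 0 < b / a := by positivity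
    have hx1 : b / a ≤ 1 := (div_le_one ha).2 h
    have hs := Real.hasSum_pow_div_log_of_abs_lt_one (x := 1 - b / a)
      (by rw [abs_lt]; constructor <;> linarith)
    have h2 := sum_le_hasSum (Finset.range 2) (fun i _ => by
      have : 0 ≤ 1 - b / a := by linarith
      positivity) hs
    rw [Finset.sum_range_succ, Finset.sum_range_one, sub_sub_cancel, Real.log_div hb.ne' ha.ne'] at h2
    norm_num at h2
    have h3 := mul_le_mul_of_nonneg_left h2 ha.le
    have h4 : a * (1 - b / a + (1 - b / a) ^ 2 / 2) = (a - b) + (a - b) ^ 2 / 2 / a := by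
      field_simp
    have h5 : (a - b) ^ 2 / 2 ≤ (a - b) ^ 2 / 2 / a := by
      rw [le_div_iff₀ ha]
      nlinarith [sq_nonneg (a - b)]
    nlinarith
  · have ht : 0 ≤ Real.log b - Real.log a := sub_nonneg.2 (Real.log_le_log ha h)
    have h1 := Real.self_le_sinh_iff.2 ht
    rw [Real.sinh_eq, neg_sub, Real.exp_sub, Real.exp_sub, Real.exp_log ha, Real.exp_log hb] at h1
    have h3 := mul_le_mul_of_nonneg_left h1 ha.le
    have h4 : a * ((b / a - a / b) / 2) = b - a - (a - b) ^ 2 / 2 / b := by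
      field_simp
      ring
    have h5 : (a - b) ^ 2 / 2 ≤ (a - b) ^ 2 / 2 / b := by
      rw [le_div_iff₀ hb]
      nlinarith [sq_nonneg (a - b)]
    nlinarith

theorem stmt_5
    {W K E : Type*} [Fintype W] [Fintype K] [Fintype E]
    [DecidableEq W] [DecidableEq E]
    [Nonempty W] [Nonempty K]
    (ω : K → W) (hω : Function.Surjective ω)
    (Λ : E → K → ℝ) (hΛ : ∀ e k, Λ e k = 0 ∨ Λ e k = 1)
    (d : W → ℝ) (hd : ∀ w, 0 < d w)
    (u : (E → ℝ) → (E → ℝ))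
    (P : Set (K → ℝ))
    (hP : P = {p : K → ℝ | (∀ k, 0 ≤ p k) ∧
      ∀ w, ∑ k ∈ Finset.univ.filter (fun k => ω k = w), p k = 1})
    (Λbar : E → K → ℝ) (hΛbar : ∀ e k, Λbar e k = d (ω k) * Λ e k)
    (c : (K → ℝ) → K → ℝ)
    (hc : ∀ p k, c p k = ∑ e, Λ e k * u (fun e' => ∑ k', Λbar e' k' * p k') e)
    (q : ℝ → (K → ℝ) → K → ℝ)
    (hq : ∀ (rr : ℝ) (ss : K → ℝ) (k : K),
      q rr ss k = Real.exp (-rr * ss k) /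
        ∑ k' ∈ Finset.univ.filter (fun k' => ω k' = ω k), Real.exp (-rr * ss k'))
    (Pstar : Set (K → ℝ))
    (hPstar : Pstar = {ps ∈ P | ∀ pp ∈ P, 0 ≤ ∑ k, c ps k * (pp k - ps k)})
    (D : (K → ℝ) → (K → ℝ) → ℝ)
    (hD : ∀ a b, D a b = ∑ k, a k * (Real.log (a k) - Real.log (b k)))
    (r : ℝ) (hr : 0 < r)
    (η : ℕ → ℝ) (hη : ∀ t, 0 < η t)
    (s : ℕ → K → ℝ) (p : ℕ → K → ℝ)
    (hp : ∀ t, p t = q r (s t))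
    (hs : ∀ t, s (t + 1) = fun k => s t k + η t * c (p t) k)
 :
    ∀ pstar ∈ Pstar, ∀ t : ℕ,
      D pstar (p (t + 1)) ≤ D pstar (p t)
        - (1 / 2) * (∑ k, (p t k - p (t + 1) k) ^ 2)
        + r * η t * ∑ k, c (p t) k * (pstar k - p (t + 1) k) := by
  intro ps hps t
  rw [hPstar, hP] at hps
  obtain ⟨⟨-, hps1⟩, -⟩ := hps
  have hZ : ∀ t w, 0 < ∑ k' ∈ Finset.univ.filter (fun k' => ω k' = w), Real.exp (-r * s t k') := by
    intro t w
    obtain ⟨k, hk⟩ := hω w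
    exact Finset.sum_pos (fun i _ => Real.exp_pos _) ⟨k, by simp [hk]⟩
  have hpe : ∀ t k, p t k = Real.exp (-r * s t k) /
      ∑ k' ∈ Finset.univ.filter (fun k' => ω k' = ω k), Real.exp (-r * s t k') := by
    intro t k
    rw [hp, hq]
  have hpos : ∀ t k, 0 < p t k := fun t k => by
    rw [hpe]; exact div_pos (Real.exp_pos _) (hZ _ _)
  have hsum : ∀ t w, ∑ k ∈ Finset.univ.filter (fun k => ω k = w), p t k = 1 := by
    intro t w
    have : ∀ k ∈ Finset.univ.filter (fun k => ω k = w), p t k = Real.exp (-r * s t k) /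
      ∑ k' ∈ Finset.univ.filter (fun k' => ω k' = w), Real.exp (-r * s t k') := by
      intro k hk
      rw [hpe, (Finset.mem_filter.1 hk).2]
    rw [Finset.sum_congr rfl this, ← Finset.sum_div]
    exact div_self (hZ t w).ne'
  have hle : ∀ t k, p t k ≤ 1 := by
    intro t k
    rw [← hsum t (ω k)]
    exact Finset.single_le_sum (f := p t) (fun i _ => (hpos t i).le) (by simp)
  -- sums of functions that factor through the OD pair
  have hfac : ∀ (g : W → ℝ) (a : K → ℝ),
      (∀ w, ∑ k ∈ Finset.univ.filter (fun k => ω k = w), a k = 1) →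
      ∑ k, a k * g (ω k) = ∑ w, g w := by
    intro g a h
    rw [← Finset.sum_fiberwise Finset.univ ω]
    refine Finset.sum_congr rfl fun w _ => ?_
    have : ∀ k ∈ Finset.univ.filter (fun k => ω k = w), a k * g (ω k) = a k * g w := by
      intro k hk
      rw [(Finset.mem_filter.1 hk).2]
    rw [Finset.sum_congr rfl this, ← Finset.sum_mul, h, one_mul]
  obtain ⟨g, hg⟩ : ∃ g : W → ℝ, ∀ k,
      Real.log (p t k) - Real.log (p (t + 1) k) = r * η t * c (p t) k + g (ω k) := by
    refine ⟨fun w => Real.log (∑ k' ∈ Finset.univ.filter (fun k' => ω k' = w),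
      Real.exp (-r * s (t + 1) k')) - Real.log (∑ k' ∈ Finset.univ.filter (fun k' => ω k' = w),
      Real.exp (-r * s t k')), fun k => ?_⟩
    rw [hpe t k, hpe (t + 1) k, Real.log_div (Real.exp_pos _).ne' (hZ _ _).ne',
      Real.log_div (Real.exp_pos _).ne' (hZ _ _).ne', Real.log_exp, Real.log_exp]
    have : s (t + 1) k = s t k + η t * c (p t) k := by rw [hs]
    linear_combination (r : ℝ) * this
  have e1 : D ps (p (t + 1)) - D ps (p t)
      = r * η t * ∑ k, c (p t) k * ps k + ∑ w, g w := by
    rw [hD, hD, ← hfac g ps hps1, Finset.mul_sum, ← Finset.sum_sub_distrib,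
      ← Finset.sum_add_distrib]
    refine Finset.sum_congr rfl fun k _ => ?_
    linear_combination ps k * hg k
  have e2 : ∑ k, p (t + 1) k * (Real.log (p (t + 1) k) - Real.log (p t k))
      = - (r * η t * ∑ k, c (p t) k * p (t + 1) k + ∑ w, g w) := by
    rw [← hfac g _ (hsum (t + 1)), Finset.mul_sum, ← Finset.sum_add_distrib,
      ← Finset.sum_neg_distrib]
    refine Finset.sum_congr rfl fun k _ => ?_
    linear_combination - p (t + 1) k * hg k
  have e3 : ∀ t, ∑ k, p t k = ∑ _w : W, (1 : ℝ) := by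
    intro t
    rw [← hfac (fun _ => 1) _ (hsum t)]
    simp
  have e4 : (1 / 2) * (∑ k, (p t k - p (t + 1) k) ^ 2)
      ≤ ∑ k, p (t + 1) k * (Real.log (p (t + 1) k) - Real.log (p t k))
        - ∑ k, p (t + 1) k + ∑ k, p t k := by
    rw [Finset.mul_sum, ← Finset.sum_sub_distrib, ← Finset.sum_add_distrib]
    refine Finset.sum_le_sum fun k _ => ?_
    have := aux_scalar (hpos (t + 1) k) (hpos t k) (hle _ _) (hle _ _)
    linarith [sq_nonneg (p t k - p (t + 1) k), sub_sq_comm (p t k) (p (t + 1) k)]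
  have e5 : ∑ k, c (p t) k * (ps k - p (t + 1) k)
      = ∑ k, c (p t) k * ps k - ∑ k, c (p t) k * p (t + 1) k := by
    rw [← Finset.sum_sub_distrib]
    exact Finset.sum_congr rfl fun k _ => mul_sub _ _ _
  rw [e2, e3, e3] at e4
  rw [e5, mul_sub]
  linarith
end

section
/- Under Assumptions 1 and 2, let L > 0 be such that c is 1/(4L)-cocoercive on P. Then in the CumLog dynamics with finite initial valuation s^0 ∈ ℝ^K, for every p* ∈ P* and every t ≥ 0, D(p*, p^{t+1}) ≤ D(p*, p^t) − ((1 − 2 r η^t L)/2) · ‖p^t − p^{t+1}‖₂². -/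
open Finset Filter Topology

lemma kl_pointwise (x y : ℝ) (hx : 0 < x) (hx1 : x ≤ 1) (hy : 0 < y) (hy1 : y ≤ 1) :
    (x - y) ^ 2 / 2 ≤ x * (Real.log x - Real.log y) - x + y := by
  set F : ℝ → ℝ := fun t => x * (Real.log x - Real.log t) - x + t - (x - t) ^ 2 / 2 with hF
  have hder : ∀ t, 0 < t → HasDerivAt F ((t - x) * (1 / t - 1)) t := by
    intro t ht
    have h1 := (((Real.hasDerivAt_log ht.ne').const_sub (Real.log x)).const_mul x).sub_const x
    have h2 := (h1.add (hasDerivAt_id t)).sub ((((hasDerivAt_id t).const_sub x).pow 2).div_const 2)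
    refine (h2.congr_deriv ?_)
    simp
    field_simp
    ring
  have hFx : F x = 0 := by simp [hF]
  have key : 0 ≤ F y := by
    rcases le_total y x with h | h
    · have hanti : AntitoneOn F (Set.Icc y x) := by
        apply antitoneOn_of_deriv_nonpos (convex_Icc y x)
        · intro t ht
          exact (hder t (lt_of_lt_of_le hy ht.1)).continuousAt.continuousWithinAt
        · intro t ht
          rw [interior_Icc] at ht
          exact (hder t (hy.trans ht.1)).differentiableAt.differentiableWithinAt
        · intro t ht
          rw [interior_Icc] at ht
          have ht0 : 0 < t := hy.trans ht.1
          rw [(hder t ht0).deriv]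
          have : 1 ≤ 1 / t := by rw [le_div_iff₀ ht0]; linarith [ht.2]
          nlinarith [ht.2]
      have := hanti ⟨le_refl y, h⟩ ⟨h, le_refl x⟩ h
      linarith
    · have hmono : MonotoneOn F (Set.Icc x y) := by
        apply monotoneOn_of_deriv_nonneg (convex_Icc x y)
        · intro t ht
          exact (hder t (lt_of_lt_of_le hx ht.1)).continuousAt.continuousWithinAt
        · intro t ht
          rw [interior_Icc] at ht
          exact (hder t (hx.trans ht.1)).differentiableAt.differentiableWithinAt
        · intro t ht
          rw [interior_Icc] at ht
          have ht0 : 0 < t := hx.trans ht.1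
          rw [(hder t ht0).deriv]
          have : 1 ≤ 1 / t := by rw [le_div_iff₀ ht0]; linarith [ht.2]
          nlinarith [ht.1]
      have := hmono ⟨le_refl x, h⟩ ⟨h, le_refl y⟩ h
      linarith
  simp only [hF] at key
  linarith

theorem stmt_6
    {W K E : Type*} [Fintype W] [Fintype K] [Fintype E]
    [DecidableEq W] [DecidableEq E]
    [Nonempty W] [Nonempty K]
    (ω : K → W) (hω : Function.Surjective ω)
    (Λ : E → K → ℝ) (hΛ : ∀ e k, Λ e k = 0 ∨ Λ e k = 1)
    (d : W → ℝ) (hd : ∀ w, 0 < d w)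
    (u : (E → ℝ) → (E → ℝ))
    (P : Set (K → ℝ))
    (hP : P = {p : K → ℝ | (∀ k, 0 ≤ p k) ∧
      ∀ w, ∑ k ∈ Finset.univ.filter (fun k => ω k = w), p k = 1})
    (Λbar : E → K → ℝ) (hΛbar : ∀ e k, Λbar e k = d (ω k) * Λ e k)
    (c : (K → ℝ) → K → ℝ)
    (hc : ∀ p k, c p k = ∑ e, Λ e k * u (fun e' => ∑ k', Λbar e' k' * p k') e)
    (X : Set (E → ℝ)) (hX : X = (fun p e => ∑ k, Λbar e k * p k) '' P)
    (hu1 : ∃ U : Set (E → ℝ), IsOpen U ∧ X ⊆ U ∧ ContDiffOn ℝ 2 u U)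
    (hu2 : ∀ x ∈ X,
      (∀ v : E → ℝ, 0 ≤ ∑ i, ∑ j, v i * (fderiv ℝ u x (Pi.single j (1 : ℝ)) i) * v j) ∧
      (∀ v : E → ℝ, 0 ≤ ∑ i, ∑ j,
        v i * (∑ m, fderiv ℝ u x (Pi.single m (1 : ℝ)) i *
          fderiv ℝ u x (Pi.single j (1 : ℝ)) m) * v j))
    (L : ℝ) (hL : 0 < L)
    (hcoco : ∀ a ∈ P, ∀ b ∈ P,
      (1 / (4 * L)) * ∑ k, (c b k - c a k) ^ 2 ≤ ∑ k, (c b k - c a k) * (b k - a k))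
    (q : ℝ → (K → ℝ) → K → ℝ)
    (hq : ∀ (rr : ℝ) (ss : K → ℝ) (k : K),
      q rr ss k = Real.exp (-rr * ss k) /
        ∑ k' ∈ Finset.univ.filter (fun k' => ω k' = ω k), Real.exp (-rr * ss k'))
    (Pstar : Set (K → ℝ))
    (hPstar : Pstar = {ps ∈ P | ∀ pp ∈ P, 0 ≤ ∑ k, c ps k * (pp k - ps k)})
    (D : (K → ℝ) → (K → ℝ) → ℝ)
    (hD : ∀ a b, D a b = ∑ k, a k * (Real.log (a k) - Real.log (b k)))
    (r : ℝ) (hr : 0 < r)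
    (η : ℕ → ℝ) (hη : ∀ t, 0 < η t)
    (s : ℕ → K → ℝ) (p : ℕ → K → ℝ)
    (hp : ∀ t, p t = q r (s t))
    (hs : ∀ t, s (t + 1) = fun k => s t k + η t * c (p t) k)
 :
    ∀ pstar ∈ Pstar, ∀ t : ℕ,
      D pstar (p (t + 1)) ≤ D pstar (p t)
        - ((1 - 2 * r * η t * L) / 2) * ∑ k, (p t k - p (t + 1) k) ^ 2 := by
  intro ps hps t
  rw [hPstar] at hps
  obtain ⟨hpsP, hvi⟩ := hps
  have hZ : ∀ (n : ℕ) (k : K), 0 < ∑ k' ∈ Finset.univ.filter (fun k' => ω k' = ω k),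
      Real.exp (-r * s n k') := fun n k =>
    Finset.sum_pos (fun _ _ => Real.exp_pos _) ⟨k, by simp⟩
  have hpos : ∀ n k, 0 < p n k := by
    intro n k
    rw [hp, hq]
    exact div_pos (Real.exp_pos _) (hZ n k)
  have hsum : ∀ n w, ∑ k ∈ Finset.univ.filter (fun k => ω k = w), p n k = 1 := by
    intro n w
    obtain ⟨k0, rfl⟩ := hω w
    have : ∀ k ∈ Finset.univ.filter (fun k => ω k = ω k0), p n k =
        Real.exp (-r * s n k) / ∑ k' ∈ Finset.univ.filter (fun k' => ω k' = ω k0),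
          Real.exp (-r * s n k') := by
      intro k hk
      have hk' : ω k = ω k0 := by simpa using hk
      rw [hp, hq, hk']
    rw [Finset.sum_congr rfl this, ← Finset.sum_div]
    exact div_self (hZ n k0).ne'
  have hpP : ∀ n, p n ∈ P := by
    intro n
    rw [hP]
    exact ⟨fun k => (hpos n k).le, hsum n⟩
  have hle1 : ∀ n k, p n k ≤ 1 := by
    intro n k
    rw [← hsum n (ω k)]
    exact Finset.single_le_sum (f := p n) (fun i _ => (hpos n i).le) (by simp)
  have hlog : ∀ n k, Real.log (p n k) = -r * s n k - Real.log
      (∑ k' ∈ Finset.univ.filter (fun k' => ω k' = ω k), Real.exp (-r * s n k')) := by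
    intro n k
    rw [hp, hq, Real.log_div (Real.exp_pos _).ne' (hZ n k).ne', Real.log_exp]
  have hconst : ∀ (x y : K → ℝ), x ∈ P → y ∈ P → ∀ g : W → ℝ,
      ∑ k, (x k - y k) * g (ω k) = 0 := by
    intro x y hx hy g
    rw [hP] at hx hy
    rw [← Finset.sum_fiberwise Finset.univ ω]
    apply Finset.sum_eq_zero
    intro w _
    have : ∀ k ∈ Finset.univ.filter (fun k => ω k = w), (x k - y k) * g (ω k)
        = (x k - y k) * g w := by
      intro k hk
      have hk' : ω k = w := by simpa using hk
      rw [hk']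
    rw [Finset.sum_congr rfl this, ← Finset.sum_mul, Finset.sum_sub_distrib, hx.2 w, hy.2 w]
    simp
  obtain ⟨g, hg⟩ : ∃ g : W → ℝ, ∀ k, Real.log (p t k) - Real.log (p (t+1) k)
      = r * η t * c (p t) k + g (ω k) := by
    refine ⟨fun w => Real.log (∑ k' ∈ Finset.univ.filter (fun k' => ω k' = w),
        Real.exp (-r * s (t+1) k')) - Real.log (∑ k' ∈ Finset.univ.filter (fun k' => ω k' = w),
        Real.exp (-r * s t k')), fun k => ?_⟩
    have h1 : s (t+1) k = s t k + η t * c (p t) k := by rw [hs]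
    rw [hlog, hlog, h1]
    ring
  have hKL : ∑ k, (p t k - p (t+1) k) ^ 2 / 2 ≤
      ∑ k, (p (t+1) k * (Real.log (p (t+1) k) - Real.log (p t k)) + (p t k - p (t+1) k) * 1) := by
    apply Finset.sum_le_sum
    intro k _
    have := kl_pointwise _ _ (hpos (t+1) k) (hle1 _ k) (hpos t k) (hle1 _ k)
    nlinarith
  rw [Finset.sum_add_distrib, hconst _ _ (hpP t) (hpP (t+1)) (fun _ => 1), add_zero,
    ← Finset.sum_div] at hKL
  have hid : D ps (p (t+1)) - D ps (p t) = r * η t * ∑ k, c (p t) k * (ps k - p (t+1) k)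
      - ∑ k, p (t+1) k * (Real.log (p (t+1) k) - Real.log (p t k)) := by
    have h0 := hconst _ _ hpsP (hpP (t+1)) g
    rw [hD, hD, Finset.mul_sum, ← Finset.sum_sub_distrib, ← Finset.sum_sub_distrib,
      ← sub_eq_zero, ← Finset.sum_sub_distrib, ← h0]
    apply Finset.sum_congr rfl
    intro k _
    linear_combination (ps k - p (t+1) k) * hg k
  have hcc := hcoco ps hpsP (p t) (hpP t)
  have hv := hvi (p (t+1)) (hpP (t+1))
  have hyoung : ∑ k, (c (p t) k - c ps k) * (p t k - p (t+1) k) ≤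
      (1 / (4 * L)) * ∑ k, (c (p t) k - c ps k) ^ 2 + L * ∑ k, (p t k - p (t+1) k) ^ 2 := by
    rw [Finset.mul_sum, Finset.mul_sum, ← Finset.sum_add_distrib]
    apply Finset.sum_le_sum
    intro k _
    have : (1 / (4 * L)) * (c (p t) k - c ps k) ^ 2 + L * (p t k - p (t+1) k) ^ 2
        - (c (p t) k - c ps k) * (p t k - p (t+1) k)
        = L * ((c (p t) k - c ps k) / (2 * L) - (p t k - p (t+1) k)) ^ 2 := by
      field_simp
      ring
    have h2 : 0 ≤ L * ((c (p t) k - c ps k) / (2 * L) - (p t k - p (t+1) k)) ^ 2 := by positivity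
    linarith
  have hsplit : ∑ k, c (p t) k * (ps k - p (t+1) k) =
      ∑ k, (c (p t) k - c ps k) * (p t k - p (t+1) k)
      - ∑ k, (c (p t) k - c ps k) * (p t k - ps k)
      - ∑ k, c ps k * (p (t+1) k - ps k) := by
    rw [← Finset.sum_sub_distrib, ← Finset.sum_sub_distrib]
    apply Finset.sum_congr rfl
    intro k _
    ring
  have hb : ∑ k, c (p t) k * (ps k - p (t+1) k) ≤ L * ∑ k, (p t k - p (t+1) k) ^ 2 := by
    linarith
  have hrη : 0 ≤ r * η t := (mul_pos hr (hη t)).le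
  have := mul_le_mul_of_nonneg_left hb hrη
  linarith
end

section
/- Under Assumptions 1 and 2, suppose the initial valuation satisfies s^0 ∈ ℝ^K (all entries finite) and the step sizes satisfy lim_{t→∞} η^t = 0 and lim_{t→∞} ∑_{i=0}^t η^i = ∞. Then the CumLog sequence p^t converges (in ℝ^K) to a point p* belonging to P*. -/
open Finset Filter Topology

/-- The strategy polytope. -/
def CLP {W K : Type*} [Fintype K] [DecidableEq W] (ω : K → W) : Set (K → ℝ) :=
  {p : K → ℝ | (∀ k, 0 ≤ p k) ∧
      ∀ w, ∑ k ∈ Finset.univ.filter (fun k => ω k = w), p k = 1}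

/-- Weighted Kullback-Leibler divergence. -/
noncomputable def CLV {W K : Type*} [Fintype K] (ω : K → W) (d : W → ℝ) (a b : K → ℝ) : ℝ :=
  ∑ k, d (ω k) * (a k * (Real.log (a k) - Real.log (b k)))

section poly
set_option linter.unusedSectionVars false
variable {W K : Type*} [Fintype W] [Fintype K] [DecidableEq W] {ω : K → W} {d : W → ℝ}

lemma CLP_sum {b : K → ℝ} (hb : b ∈ CLP ω) (f : W → ℝ) :
    ∑ k, f (ω k) * b k = ∑ w, f w := by
  rw [← Finset.sum_fiberwise (s := Finset.univ) (g := ω)]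
  refine Finset.sum_congr rfl fun w _ => ?_
  rw [← mul_one (f w), ← hb.2 w, Finset.mul_sum]
  refine Finset.sum_congr rfl fun k hk => ?_
  rw [(Finset.mem_filter.1 hk).2]

lemma CLP_le_one {b : K → ℝ} (hb : b ∈ CLP ω) (k : K) : b k ≤ 1 := by
  rw [← hb.2 (ω k)]
  exact Finset.single_le_sum (f := b) (fun i _ => hb.1 i) (by simp)

lemma CLP_closed : IsClosed (CLP ω) := by
  have : CLP ω = (⋂ k, {p : K → ℝ | 0 ≤ p k}) ∩
      ⋂ w, {p : K → ℝ | ∑ k ∈ Finset.univ.filter (fun k => ω k = w), p k = 1} := by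
    ext p; simp [CLP]
  rw [this]
  refine (isClosed_iInter fun k => ?_).inter (isClosed_iInter fun w => ?_)
  · exact isClosed_le continuous_const (by fun_prop)
  · exact isClosed_eq (by fun_prop) continuous_const

lemma CLP_compact : IsCompact (CLP ω) := by
  refine IsCompact.of_isClosed_subset (isCompact_Icc (a := (0 : K → ℝ)) (b := 1)) CLP_closed ?_
  intro b hb
  exact ⟨fun k => hb.1 k, fun k => CLP_le_one hb k⟩

lemma CLP_convex : Convex ℝ (CLP ω) := by
  intro a ha b hb s t hs ht hst
  refine ⟨fun k => ?_, fun w => ?_⟩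
  · have := ha.1 k
    have := hb.1 k
    simp only [Pi.add_apply, Pi.smul_apply, smul_eq_mul]
    positivity
  · simp only [Pi.add_apply, Pi.smul_apply, smul_eq_mul, Finset.sum_add_distrib,
      ← Finset.mul_sum, ha.2 w, hb.2 w]
    linarith

lemma CLV_term {a b : ℝ} (ha : 0 ≤ a) (hb : 0 < b) :
    (√a - √b) ^ 2 ≤ a * (Real.log a - Real.log b) - a + b := by
  rcases ha.eq_or_lt with rfl | ha
  · simp [Real.sq_sqrt hb.le]
  have h1 : Real.log (√b / √a) ≤ √b / √a - 1 :=
    Real.log_le_sub_one_of_pos (by positivity)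
  rw [Real.log_div (by positivity) (by positivity), Real.log_sqrt hb.le, Real.log_sqrt ha.le] at h1
  have h2 := mul_le_mul_of_nonneg_left h1 ha.le
  have h3 : a * (√b / √a - 1) = √a * √b - a := by
    calc a * (√b / √a - 1) = a / √a * √b - a := by ring
      _ = _ := by rw [Real.div_sqrt]
  nlinarith [Real.sq_sqrt ha.le, Real.sq_sqrt hb.le]

lemma CLV_ge (hd : ∀ w, 0 < d w) {a b : K → ℝ} (ha : a ∈ CLP ω) (hb : b ∈ CLP ω)
    (hb0 : ∀ k, 0 < b k) : ∑ k, d (ω k) * (√(a k) - √(b k)) ^ 2 ≤ CLV ω d a b := by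
  have : CLV ω d a b = ∑ k, d (ω k) * (a k * (Real.log (a k) - Real.log (b k)) - a k + b k) := by
    have h1 := CLP_sum ha d
    have h2 := CLP_sum hb d
    simp only [CLV, mul_add, mul_sub, Finset.sum_add_distrib, Finset.sum_sub_distrib] at *
    linarith
  rw [this]
  exact Finset.sum_le_sum fun k _ =>
    mul_le_mul_of_nonneg_left (CLV_term (ha.1 k) (hb0 k)) (hd _).le

lemma CLV_nonneg (hd : ∀ w, 0 < d w) {a b : K → ℝ} (ha : a ∈ CLP ω) (hb : b ∈ CLP ω)
    (hb0 : ∀ k, 0 < b k) : 0 ≤ CLV ω d a b :=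
  le_trans (Finset.sum_nonneg fun _ _ => mul_nonneg (hd _).le (sq_nonneg _)) (CLV_ge hd ha hb hb0)

lemma CLV_tendsto_self {a : K → ℝ} {b : ℕ → K → ℝ} (h : Tendsto b atTop (𝓝 a)) :
    Tendsto (fun n => CLV ω d a (b n)) atTop (𝓝 0) := by
  have : (0 : ℝ) = ∑ k : K, 0 := by simp
  rw [this]
  unfold CLV
  refine tendsto_finsetSum _ fun k _ => ?_
  by_cases hk : a k = 0
  · simp [hk]
  have h1 : Tendsto (fun n => b n k) atTop (𝓝 (a k)) := (tendsto_pi_nhds.1 h) k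
  have h2 := h1.log hk
  have h3 := ((tendsto_const_nhds (x := Real.log (a k))).sub h2).const_mul (a k) |>.const_mul
    (d (ω k))
  simpa using h3

lemma CLV_tendsto (hd : ∀ w, 0 < d w) {a : K → ℝ} {b : ℕ → K → ℝ} (ha : a ∈ CLP ω)
    (hb : ∀ n, b n ∈ CLP ω) (hb0 : ∀ n k, 0 < b n k)
    (h : Tendsto (fun n => CLV ω d a (b n)) atTop (𝓝 0)) : Tendsto b atTop (𝓝 a) := by
  rw [tendsto_pi_nhds]
  intro k
  have h1 : Tendsto (fun n => (√(b n k) - √(a k)) ^ 2) atTop (𝓝 0) := by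
    have h2 : Tendsto (fun n => CLV ω d a (b n) / d (ω k)) atTop (𝓝 0) := by
      simpa using h.div_const (d (ω k))
    refine squeeze_zero (fun n => sq_nonneg _) (fun n => ?_) h2
    rw [le_div_iff₀ (hd _)]
    refine le_trans ?_ (CLV_ge hd ha (hb n) (hb0 n))
    have := Finset.single_le_sum (f := fun k => d (ω k) * (√(a k) - √(b n k)) ^ 2)
      (fun i _ => mul_nonneg (hd _).le (sq_nonneg _)) (Finset.mem_univ k)
    refine le_trans (le_of_eq ?_) this
    ring
  have h2 : Tendsto (fun n => √(b n k) - √(a k)) atTop (𝓝 0) := by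
    have := h1.sqrt
    simp only [Real.sqrt_sq_eq_abs, Real.sqrt_zero] at this
    exact (tendsto_zero_iff_abs_tendsto_zero _).2 this
  have h3 := (h2.add_const (√(a k))).pow 2
  simp only [sub_add_cancel, zero_add, Real.sq_sqrt (ha.1 k)] at h3
  exact h3.congr fun n => Real.sq_sqrt (hb0 n k).le

lemma CL_step (hω : Function.Surjective ω) (hd : ∀ w, 0 < d w) {a b b' g : K → ℝ} (ha : a ∈ CLP ω)
    (hb : b ∈ CLP ω) (hb0 : ∀ k, 0 < b k) (h : ℝ) (m : W → ℝ)
    (hb' : ∀ k, b' k = b k * Real.exp (-h * g k) /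
      ∑ k' ∈ Finset.univ.filter (fun k' => ω k' = ω k), b k' * Real.exp (-h * g k'))
    (hm : ∀ k, |h * (g k - m (ω k))| ≤ 1) :
    CLV ω d a b' ≤ CLV ω d a b - h * ∑ k, d (ω k) * (g k * (b k - a k))
      + h ^ 2 * ∑ k, d (ω k) * (b k * (g k - m (ω k)) ^ 2) := by
  set Z : W → ℝ := fun w => ∑ k' ∈ Finset.univ.filter (fun k' => ω k' = w),
    b k' * Real.exp (-(h * (g k' - m (ω k')))) with hZ
  have hZpos : ∀ w, 0 < Z w := by
    intro w
    refine Finset.sum_pos (fun k _ => mul_pos (hb0 k) (Real.exp_pos _)) ?_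
    obtain ⟨k, hk⟩ := hω w
    exact ⟨k, by simp [hk]⟩
  have hlog : ∀ k, Real.log (b k) - Real.log (b' k) = h * (g k - m (ω k)) + Real.log (Z (ω k)) := by
    intro k
    have e1 : ∑ k' ∈ Finset.univ.filter (fun k' => ω k' = ω k), b k' * Real.exp (-h * g k')
        = Real.exp (-h * m (ω k)) * Z (ω k) := by
      rw [hZ, Finset.mul_sum]
      refine Finset.sum_congr rfl fun k' hk' => ?_
      rw [← (Finset.mem_filter.1 hk').2, mul_left_comm, ← Real.exp_add]
      congr 2
      ring
    rw [hb' k, e1, Real.log_div (mul_pos (hb0 k) (Real.exp_pos _)).ne'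
      (mul_pos (Real.exp_pos _) (hZpos _)).ne', Real.log_mul (hb0 k).ne' (Real.exp_pos _).ne',
      Real.log_mul (Real.exp_pos _).ne' (hZpos _).ne', Real.log_exp, Real.log_exp]
    ring
  have hlogZ : ∀ w, Real.log (Z w) ≤ ∑ k ∈ Finset.univ.filter (fun k => ω k = w),
      b k * (-(h * (g k - m (ω k))) + (h * (g k - m (ω k))) ^ 2) := by
    intro w
    refine (Real.log_le_sub_one_of_pos (hZpos w)).trans ?_
    rw [← hb.2 w, hZ, ← Finset.sum_sub_distrib]
    refine Finset.sum_le_sum fun k _ => ?_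
    rw [← mul_sub_one]
    refine mul_le_mul_of_nonneg_left ?_ (hb0 k).le
    have := Real.abs_exp_sub_one_sub_id_le (x := -(h * (g k - m (ω k)))) (by rw [abs_neg]; exact hm k)
    have := (abs_le.1 this).2
    rw [neg_sq] at this
    linarith
  have e2 : CLV ω d a b' - CLV ω d a b
      = h * ∑ k, d (ω k) * (a k * (g k - m (ω k))) + ∑ w, d w * Real.log (Z w) := by
    rw [← CLP_sum ha (fun w => d w * Real.log (Z w)), Finset.mul_sum, ← Finset.sum_add_distrib,
      CLV, CLV, ← Finset.sum_sub_distrib]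
    refine Finset.sum_congr rfl fun k _ => ?_
    linear_combination d (ω k) * a k * hlog k
  have e3 : ∑ w, d w * Real.log (Z w) ≤
      ∑ k, d (ω k) * (b k * (-(h * (g k - m (ω k))) + (h * (g k - m (ω k))) ^ 2)) := by
    rw [← Finset.sum_fiberwise (s := Finset.univ) (g := ω)]
    refine Finset.sum_le_sum fun w _ => ?_
    refine (mul_le_mul_of_nonneg_left (hlogZ w) (hd w).le).trans (le_of_eq ?_)
    rw [Finset.mul_sum]
    refine Finset.sum_congr rfl fun k hk => ?_
    rw [(Finset.mem_filter.1 hk).2]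
  have e4 : ∑ k, d (ω k) * (b k * (-(h * (g k - m (ω k))) + (h * (g k - m (ω k))) ^ 2))
      = -h * ∑ k, d (ω k) * (b k * (g k - m (ω k)))
        + h ^ 2 * ∑ k, d (ω k) * (b k * (g k - m (ω k)) ^ 2) := by
    rw [Finset.mul_sum, Finset.mul_sum, ← Finset.sum_add_distrib]
    refine Finset.sum_congr rfl fun k _ => ?_
    ring
  have e5 : ∑ k, d (ω k) * (g k * (b k - a k)) = ∑ k, d (ω k) * (b k * (g k - m (ω k)))
      - ∑ k, d (ω k) * (a k * (g k - m (ω k))) := by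
    have h1 := CLP_sum ha (fun w => d w * m w)
    have h2 := CLP_sum hb (fun w => d w * m w)
    have h3 : ∑ k, d (ω k) * m (ω k) * (b k - a k) = 0 := by
      simp only [mul_sub, Finset.sum_sub_distrib]
      linarith
    rw [← Finset.sum_sub_distrib, ← sub_eq_zero, ← Finset.sum_sub_distrib, ← h3]
    refine Finset.sum_congr rfl fun k _ => ?_
    ring
  rw [e5]
  linarith

end poly

lemma CL_matrix {E : Type*} [Fintype E] (A : E → E → ℝ) (M : ℝ) (hM0 : 0 < M)
    (hM : ∀ i j, |A i j| ≤ M)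
    (h1 : ∀ v : E → ℝ, 0 ≤ ∑ i, ∑ j, v i * A i j * v j)
    (h2 : ∀ v : E → ℝ, 0 ≤ ∑ i, ∑ j, v i * (∑ m, A i m * A m j) * v j) (v : E → ℝ) :
    ∑ i, (∑ j, A i j * v j) ^ 2 ≤
      (4 * M * (Fintype.card E + 1)) * ∑ i, (∑ j, A i j * v j) * v i := by
  set L : ℝ := 2 * M * (Fintype.card E + 1) with hL
  have hLpos : 0 < L := by positivity
  -- b = transpose applied
  set a : E → ℝ := fun i => ∑ j, A i j * v j with ha
  set b : E → ℝ := fun j => ∑ i, v i * A i j with hb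
  set w : E → ℝ := fun i => a i + b i with hw
  have hab : 0 ≤ ∑ m, b m * a m := by
    have e : ∑ i, ∑ j, v i * (∑ m, A i m * A m j) * v j = ∑ m, b m * a m := by
      simp only [ha, hb, Finset.sum_mul_sum]
      simp only [Finset.mul_sum, Finset.sum_mul]
      calc _ = ∑ i, ∑ m, ∑ j, v i * (A i m * A m j) * v j :=
            Finset.sum_congr rfl fun i _ => Finset.sum_comm
        _ = ∑ m, ∑ i, ∑ j, v i * (A i m * A m j) * v j := Finset.sum_comm
        _ = _ := by
            refine Finset.sum_congr rfl fun m _ => Finset.sum_congr rfl fun i _ =>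
              Finset.sum_congr rfl fun j _ => by ring
    rw [← e]; exact h2 v
  have hle : ∑ i, a i ^ 2 ≤ ∑ i, w i ^ 2 := by
    have : ∑ i, w i ^ 2 = ∑ i, a i ^ 2 + 2 * ∑ i, b i * a i + ∑ i, b i ^ 2 := by
      rw [Finset.mul_sum, ← Finset.sum_add_distrib, ← Finset.sum_add_distrib]
      refine Finset.sum_congr rfl fun i _ => ?_
      simp only [hw]; ring
    have h3 : 0 ≤ ∑ i, b i ^ 2 := Finset.sum_nonneg fun i _ => sq_nonneg _
    linarith
  have hva : ∑ i, ∑ j, v i * A i j * v j = ∑ i, a i * v i := by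
    refine Finset.sum_congr rfl fun i _ => ?_
    rw [ha, Finset.sum_mul]
    refine Finset.sum_congr rfl fun j _ => by ring
  -- quadratic form in w
  have hww : ∑ i, ∑ j, w i * A i j * w j ≤ L / 2 * ∑ i, w i ^ 2 := by
    calc ∑ i, ∑ j, w i * A i j * w j ≤ ∑ i, ∑ j, M * ((w i ^ 2 + w j ^ 2) / 2) := by
          refine Finset.sum_le_sum fun i _ => Finset.sum_le_sum fun j _ => ?_
          calc w i * A i j * w j ≤ |w i * A i j * w j| := le_abs_self _
            _ = |A i j| * (|w i| * |w j|) := by rw [abs_mul, abs_mul]; ring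
            _ ≤ M * ((w i ^ 2 + w j ^ 2) / 2) := by
              refine mul_le_mul (hM i j) ?_ (by positivity) hM0.le
              nlinarith [sq_nonneg (|w i| - |w j|), sq_abs (w i), sq_abs (w j)]
      _ = M * Fintype.card E * ∑ i, w i ^ 2 := by
          simp only [← Finset.mul_sum, add_div, Finset.sum_add_distrib, Finset.sum_const,
            Finset.card_univ, nsmul_eq_mul, ← Finset.sum_div]
          ring
      _ ≤ L / 2 * ∑ i, w i ^ 2 := by
          refine mul_le_mul_of_nonneg_right ?_ (Finset.sum_nonneg fun i _ => sq_nonneg _)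
          rw [hL]; nlinarith
  have hcross : ∑ i, ∑ j, (v i * A i j * w j + w i * A i j * v j) = ∑ i, w i ^ 2 := by
    have e1 : ∑ i, ∑ j, v i * A i j * w j = ∑ j, b j * w j := by
      rw [Finset.sum_comm]
      refine Finset.sum_congr rfl fun j _ => ?_
      rw [hb, Finset.sum_mul]
    have e2 : ∑ i, ∑ j, w i * A i j * v j = ∑ j, a j * w j := by
      refine Finset.sum_congr rfl fun j _ => ?_
      rw [ha, Finset.sum_mul]
      refine Finset.sum_congr rfl fun i _ => by ring
    simp only [Finset.sum_add_distrib]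
    rw [e1, e2, ← Finset.sum_add_distrib]
    refine Finset.sum_congr rfl fun i _ => ?_
    simp only [hw]; ring
  have key := h1 (fun i => v i - 1 / L * w i)
  have e : ∑ i, ∑ j, (v i - 1 / L * w i) * A i j * (v j - 1 / L * w j)
      = ∑ i, ∑ j, v i * A i j * v j
        - 1 / L * ∑ i, ∑ j, (v i * A i j * w j + w i * A i j * v j)
        + (1 / L) ^ 2 * ∑ i, ∑ j, w i * A i j * w j := by
    simp only [Finset.mul_sum, ← Finset.sum_sub_distrib, ← Finset.sum_add_distrib]
    refine Finset.sum_congr rfl fun i _ => Finset.sum_congr rfl fun j _ => by ring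
  rw [e, hcross, hva] at key
  have h5 := mul_le_mul_of_nonneg_left hww (by positivity : 0 ≤ (1 / L) ^ 2)
  have h6 : (1 / L) ^ 2 * (L / 2 * ∑ i, w i ^ 2) = 1 / (2 * L) * ∑ i, w i ^ 2 := by
    field_simp
  have h7 : 1 / (2 * L) * ∑ i, w i ^ 2 ≤ ∑ i, a i * v i := by
    have : 1 / L * ∑ i, w i ^ 2 = 2 * (1 / (2 * L) * ∑ i, w i ^ 2) := by field_simp
    linarith
  have h8 : ∑ i, w i ^ 2 ≤ 2 * L * ∑ i, a i * v i := by
    rw [one_div, inv_mul_le_iff₀ (by positivity)] at h7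
    exact h7
  calc _ ≤ _ := hle
    _ ≤ _ := h8
    _ = _ := by rw [hL]; ring

lemma CL_coco {E : Type*} [Fintype E] [DecidableEq E] {u : (E → ℝ) → (E → ℝ)} {X U : Set (E → ℝ)}
    (hXc : IsCompact X) (hXv : Convex ℝ X) (hU : IsOpen U) (hXU : X ⊆ U)
    (hu : ContDiffOn ℝ 2 u U)
    (hu2 : ∀ x ∈ X,
      (∀ v : E → ℝ, 0 ≤ ∑ i, ∑ j, v i * (fderiv ℝ u x (Pi.single j (1 : ℝ)) i) * v j) ∧
      (∀ v : E → ℝ, 0 ≤ ∑ i, ∑ j,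
        v i * (∑ m, fderiv ℝ u x (Pi.single m (1 : ℝ)) i *
          fderiv ℝ u x (Pi.single j (1 : ℝ)) m) * v j)) :
    ∃ C : ℝ, 0 < C ∧ ∀ x ∈ X, ∀ y ∈ X,
      ∑ e, (u x e - u y e) ^ 2 ≤ C * ∑ e, (u x e - u y e) * (x e - y e) := by
  have hcont : ContinuousOn (fun x => fderiv ℝ u x) X :=
    (hu.continuousOn_fderiv_of_isOpen hU (by norm_num)).mono hXU
  obtain ⟨M, hM⟩ := hXc.exists_bound_of_continuousOn hcont
  have hMx : ∀ x ∈ X, ∀ i j, |fderiv ℝ u x (Pi.single j (1 : ℝ)) i| ≤ |M| + 1 := by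
    intro x hx i j
    have h1 : ‖fderiv ℝ u x (Pi.single j (1 : ℝ)) i‖ ≤ ‖fderiv ℝ u x (Pi.single j (1 : ℝ))‖ :=
      norm_le_pi_norm _ i
    have h2 := (fderiv ℝ u x).le_opNorm (Pi.single j (1 : ℝ))
    have h3 : ‖(Pi.single j (1 : ℝ) : E → ℝ)‖ ≤ 1 := by
      rw [pi_norm_le_iff_of_nonneg zero_le_one]
      intro i
      by_cases h : i = j
      · subst h; simp
      · simp [h]
    have h4 := hM x hx
    have h5 : ‖fderiv ℝ u x‖ * ‖(Pi.single j (1 : ℝ) : E → ℝ)‖ ≤ ‖fderiv ℝ u x‖ * 1 :=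
      mul_le_mul_of_nonneg_left h3 (norm_nonneg _)
    rw [← Real.norm_eq_abs]
    have := le_abs_self M
    linarith
  set C : ℝ := 4 * (|M| + 1) * (Fintype.card E + 1) with hC
  have hCpos : 0 < C := by positivity
  refine ⟨C, hCpos, fun x hx y hy => ?_⟩
  have hlin : ∀ z, ∀ v : E → ℝ, ∀ i, fderiv ℝ u z v i =
      ∑ j, fderiv ℝ u z (Pi.single j (1 : ℝ)) i * v j := by
    intro z v i
    conv_lhs => rw [pi_eq_sum_univ' v]
    simp only [map_sum, map_smul, Finset.sum_apply, Pi.smul_apply, smul_eq_mul]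
    exact Finset.sum_congr rfl fun j _ => mul_comm _ _
  set D : E → ℝ := fun e => u x e - u y e with hD
  set v : E → ℝ := x - y with hv
  set γ : ℝ → E → ℝ := fun τ => y + τ • v with hγ
  have hγX : ∀ τ ∈ Set.Icc (0 : ℝ) 1, γ τ ∈ X := by
    intro τ hτ
    exact hXv.add_smul_sub_mem hy hx hτ
  set f : ℝ → ℝ := fun τ => ∑ e, (C * (u (γ τ) e * v e) - 2 * (u (γ τ) e * D e) + τ * D e ^ 2) with hf
  have hder : ∀ τ ∈ Set.Icc (0 : ℝ) 1, HasDerivAt f (∑ e, (C * (fderiv ℝ u (γ τ) v e * v e)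
      - 2 * (fderiv ℝ u (γ τ) v e * D e) + 1 * D e ^ 2)) τ := by
    intro τ hτ
    have h1 : HasDerivAt γ v τ := by
      have := ((hasDerivAt_id τ).smul_const v).const_add y
      simpa [hγ] using this
    have h2 : DifferentiableAt ℝ u (γ τ) :=
      ((hu.contDiffAt (hU.mem_nhds (hXU (hγX τ hτ)))).differentiableAt (by norm_num))
    have h3 : HasDerivAt (fun τ => u (γ τ)) (fderiv ℝ u (γ τ) v) τ :=
      h2.hasFDerivAt.comp_hasDerivAt τ h1
    have h4 := hasDerivAt_pi.1 h3
    refine HasDerivAt.fun_sum fun e _ => ?_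
    exact ((((h4 e).mul_const (v e)).const_mul C).sub (((h4 e).mul_const (D e)).const_mul 2)).add
      ((hasDerivAt_id τ).mul_const (D e ^ 2))
  have hmono : MonotoneOn f (Set.Icc 0 1) := by
    refine monotoneOn_of_hasDerivWithinAt_nonneg (convex_Icc 0 1)
      (fun τ hτ => (hder τ hτ).continuousAt.continuousWithinAt)
      (fun τ hτ => (hder τ (interior_subset hτ)).hasDerivWithinAt) ?_
    intro τ hτ
    have hz := hγX τ (interior_subset hτ)
    have hm := CL_matrix (fun i j => fderiv ℝ u (γ τ) (Pi.single j (1 : ℝ)) i) (|M| + 1)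
      (by positivity) (hMx _ hz) (hu2 _ hz).1 (hu2 _ hz).2 v
    simp only [← hlin] at hm
    rw [← hC] at hm
    have h5 : 0 ≤ ∑ e, (fderiv ℝ u (γ τ) v e - D e) ^ 2 := Finset.sum_nonneg fun i _ => sq_nonneg _
    have h6 : ∑ e, (C * (fderiv ℝ u (γ τ) v e * v e)
      - 2 * (fderiv ℝ u (γ τ) v e * D e) + 1 * D e ^ 2) = 
        C * ∑ e, (fderiv ℝ u (γ τ) v e * v e) - ∑ e, (fderiv ℝ u (γ τ) v e) ^ 2 +
        ∑ e, (fderiv ℝ u (γ τ) v e - D e) ^ 2 := by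
      rw [Finset.mul_sum, ← Finset.sum_sub_distrib, ← Finset.sum_add_distrib]
      exact Finset.sum_congr rfl fun i _ => by ring
    rw [h6]
    linarith
  have h01 := hmono (Set.left_mem_Icc.2 zero_le_one) (Set.right_mem_Icc.2 zero_le_one) zero_le_one
  have g0 : γ 0 = y := by simp [hγ]
  have g1 : γ 1 = x := by simp [hγ, hv]
  have : f 1 - f 0 = C * ∑ e, (u x e - u y e) * (x e - y e) - ∑ e, (u x e - u y e) ^ 2 := by
    simp only [hf, g0, g1, Finset.mul_sum, ← Finset.sum_sub_distrib]
    refine Finset.sum_congr rfl fun e _ => ?_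
    simp only [hD, hv, Pi.sub_apply]
    ring
  linarith

section dyn
set_option linter.unusedSectionVars false
variable {W K : Type*} [Fintype W] [Fintype K] [DecidableEq W] {ω : K → W} {d : W → ℝ}

lemma CL_minty {c : (K → ℝ) → K → ℝ} (hcc : ContinuousOn c (CLP ω)) {a : K → ℝ} (ha : a ∈ CLP ω)
    (h : ∀ b ∈ CLP ω, ∑ k, d (ω k) * (c b k * (a k - b k)) ≤ 0) :
    ∀ b ∈ CLP ω, 0 ≤ ∑ k, d (ω k) * (c a k * (b k - a k)) := by
  intro b hb
  set τ : ℕ → ℝ := fun n => 1 / ((n : ℝ) + 1) with hτ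
  have hτ0 : ∀ n, 0 < τ n := fun n => by positivity
  have hτ1 : ∀ n, τ n ≤ 1 := fun n => by
    rw [hτ]
    refine (div_le_one (by positivity)).2 ?_
    have : (0 : ℝ) ≤ n := by positivity
    linarith
  set y : ℕ → K → ℝ := fun n => a + τ n • (b - a) with hy
  have hyP : ∀ n, y n ∈ CLP ω := fun n =>
    CLP_convex.add_smul_sub_mem ha hb ⟨(hτ0 n).le, hτ1 n⟩
  have hyt : Tendsto y atTop (𝓝 a) := by
    have h1 : Tendsto τ atTop (𝓝 0) := tendsto_one_div_add_atTop_nhds_zero_nat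
    have := (h1.smul_const (b - a)).const_add a
    simpa using this
  have hct : Tendsto (fun n => c (y n)) atTop (𝓝 (c a)) :=
    (hcc a ha).tendsto.comp (tendsto_nhdsWithin_iff.2 ⟨hyt, Eventually.of_forall hyP⟩)
  have ht : Tendsto (fun n => ∑ k, d (ω k) * (c (y n) k * (b k - a k))) atTop
      (𝓝 (∑ k, d (ω k) * (c a k * (b k - a k)))) :=
    tendsto_finsetSum _ fun k _ =>
      (((tendsto_pi_nhds.1 hct) k).mul_const _).const_mul _
  refine ge_of_tendsto' ht fun n => ?_
  have h1 := h (y n) (hyP n)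
  have h2 : ∑ k, d (ω k) * (c (y n) k * (a k - y n k)) =
      -(τ n * ∑ k, d (ω k) * (c (y n) k * (b k - a k))) := by
    rw [Finset.mul_sum, ← Finset.sum_neg_distrib]
    refine Finset.sum_congr rfl fun k _ => ?_
    have : y n k = a k + τ n * (b k - a k) := by simp [hy]
    rw [this]
    ring
  rw [h2] at h1
  exact nonneg_of_mul_nonneg_right (by linarith) (hτ0 n)

lemma CL_wardrop (hd : ∀ w, 0 < d w) {g a : K → ℝ} (ha : a ∈ CLP ω)
    (h : ∀ b ∈ CLP ω, 0 ≤ ∑ k, d (ω k) * (g k * (b k - a k))) :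
    ∃ m : W → ℝ, (∀ k, m (ω k) ≤ g k) ∧ ∀ k, a k * (g k - m (ω k)) = 0 := by
  classical
  set m : W → ℝ := fun w => ∑ k ∈ Finset.univ.filter (fun k => ω k = w), a k * g k with hm
  have hle : ∀ k, m (ω k) ≤ g k := by
    intro k0
    set b : K → ℝ := fun k => if ω k = ω k0 then (if k = k0 then 1 else 0) else a k with hb
    have hbP : b ∈ CLP ω := by
      refine ⟨fun k => ?_, fun w => ?_⟩
      · simp only [hb]
        split_ifs
        · exact zero_le_one
        · exact le_rfl
        · exact ha.1 k
      · by_cases hw : w = ω k0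
        · subst hw
          have : ∑ k ∈ Finset.univ.filter (fun k => ω k = ω k0), b k
              = ∑ k ∈ Finset.univ.filter (fun k => ω k = ω k0), if k = k0 then 1 else 0 := by
            refine Finset.sum_congr rfl fun k hk => ?_
            simp only [hb, if_pos (Finset.mem_filter.1 hk).2]
          rw [this]
          simp
        · rw [← ha.2 w]
          refine Finset.sum_congr rfl fun k hk => ?_
          have := (Finset.mem_filter.1 hk).2
          simp only [hb]
          rw [if_neg]
          rw [this]; exact hw
    have h1 := h b hbP
    have h2 : ∑ k, d (ω k) * (g k * (b k - a k)) = d (ω k0) * (g k0 - m (ω k0)) := by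
      rw [← Finset.sum_filter_add_sum_filter_not Finset.univ (fun k => ω k = ω k0)]
      have e1 : ∑ k ∈ Finset.univ.filter (fun k => ¬ ω k = ω k0), d (ω k) * (g k * (b k - a k)) = 0 := by
        refine Finset.sum_eq_zero fun k hk => ?_
        simp only [hb, if_neg (Finset.mem_filter.1 hk).2]
        ring
      have e2 : ∑ k ∈ Finset.univ.filter (fun k => ω k = ω k0), d (ω k) * (g k * (b k - a k))
          = ∑ k ∈ Finset.univ.filter (fun k => ω k = ω k0), 
            d (ω k0) * ((if k = k0 then g k else 0) - a k * g k) := by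
        refine Finset.sum_congr rfl fun k hk => ?_
        have := (Finset.mem_filter.1 hk).2
        simp only [hb, if_pos this]
        rw [this]
        split_ifs <;> ring
      rw [e1, e2, ← Finset.mul_sum, Finset.sum_sub_distrib]
      simp [hm]
    rw [h2] at h1
    have := nonneg_of_mul_nonneg_right h1 (hd _)
    linarith
  refine ⟨m, hle, fun k => ?_⟩
  have hz : ∑ k' ∈ Finset.univ.filter (fun k' => ω k' = ω k), a k' * (g k' - m (ω k')) = 0 := by
    have : ∑ k' ∈ Finset.univ.filter (fun k' => ω k' = ω k), a k' * (g k' - m (ω k')) =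
        ∑ k' ∈ Finset.univ.filter (fun k' => ω k' = ω k), (a k' * g k' - a k' * m (ω k)) := by
      refine Finset.sum_congr rfl fun k' hk' => ?_
      rw [(Finset.mem_filter.1 hk').2]
      ring
    rw [this, Finset.sum_sub_distrib, ← Finset.sum_mul, ha.2]
    simp [hm]
  rw [Finset.sum_eq_zero_iff_of_nonneg] at hz
  · exact hz k (by simp)
  · intro k' _
    exact mul_nonneg (ha.1 k') (by linarith [hle k'])

lemma CL_exists (hd : ∀ w, 0 < d w) {c : (K → ℝ) → K → ℝ}
    (hcc : ContinuousOn c (CLP ω))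
    (hmono : ∀ a ∈ CLP ω, ∀ b ∈ CLP ω, 0 ≤ ∑ k, d (ω k) * ((c a k - c b k) * (a k - b k)))
    {p : ℕ → K → ℝ} (hp : ∀ t, p t ∈ CLP ω) (hp0 : ∀ t k, 0 < p t k)
    {h : ℕ → ℝ} (hh : ∀ t, 0 < h t) (hh0 : Tendsto h atTop (𝓝 0))
    (hsum : Tendsto (fun n => ∑ i ∈ Finset.range n, h i) atTop atTop) (Kc : ℝ)
    (hstep : ∀ t, ∀ a ∈ CLP ω, CLV ω d a (p (t + 1)) ≤ CLV ω d a (p t)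
      - h t * ∑ k, d (ω k) * (c (p t) k * (p t k - a k)) + Kc * h t ^ 2) :
    ∃ a ∈ CLP ω, ∃ m : W → ℝ, (∀ k, m (ω k) ≤ c a k) ∧ ∀ k, a k * (c a k - m (ω k)) = 0 := by
  set H : ℕ → ℝ := fun n => ∑ i ∈ Finset.range n, h i with hH
  have hHpos : ∀ n, 0 < H (n + 1) := fun n =>
    Finset.sum_pos (fun i _ => hh i) (by simp)
  set pb : ℕ → K → ℝ := fun n k => (∑ i ∈ Finset.range (n + 1), h i * p i k) / H (n + 1) with hpb
  have hpbP : ∀ n, pb n ∈ CLP ω := by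
    intro n
    refine ⟨fun k => ?_, fun w => ?_⟩
    · exact div_nonneg (Finset.sum_nonneg fun i _ => mul_nonneg (hh i).le ((hp i).1 k)) (hHpos n).le
    · simp only [hpb]
      rw [← Finset.sum_div, Finset.sum_comm, div_eq_one_iff_eq (hHpos n).ne']
      refine Finset.sum_congr rfl fun i _ => ?_
      rw [← Finset.mul_sum, (hp i).2, mul_one]
  obtain ⟨a, ha, φ, hφ, hlim⟩ := CLP_compact.tendsto_subseq hpbP
  refine ⟨a, ha, CL_wardrop hd ha (CL_minty hcc ha ?_)⟩
  intro b hb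
  have hbound : ∀ n, ∑ k, d (ω k) * (c b k * (pb n k - b k)) ≤
      (CLV ω d b (p 0) + Kc * ∑ i ∈ Finset.range (n + 1), h i ^ 2) / H (n + 1) := by
    intro n
    rw [le_div_iff₀ (hHpos n)]
    have e1 : (∑ k, d (ω k) * (c b k * (pb n k - b k))) * H (n + 1) =
        ∑ i ∈ Finset.range (n + 1), h i * ∑ k, d (ω k) * (c b k * (p i k - b k)) := by
      simp only [Finset.mul_sum]
      rw [Finset.sum_comm, Finset.sum_mul]
      refine Finset.sum_congr rfl fun k _ => ?_
      have : pb n k * H (n + 1) = ∑ i ∈ Finset.range (n + 1), h i * p i k :=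
        div_mul_cancel₀ _ (hHpos n).ne'
      calc d (ω k) * (c b k * (pb n k - b k)) * H (n + 1)
          = d (ω k) * c b k * (pb n k * H (n + 1) - H (n + 1) * b k) := by ring
        _ = ∑ i ∈ Finset.range (n + 1), d (ω k) * c b k * (h i * p i k - h i * b k) := by
          rw [this, hH, Finset.sum_mul, ← Finset.sum_sub_distrib, Finset.mul_sum]
        _ = _ := Finset.sum_congr rfl fun i _ => by ring
    rw [e1]
    have e2 : ∀ n, ∑ i ∈ Finset.range n, h i * ∑ k, d (ω k) * (c b k * (p i k - b k)) ≤
        CLV ω d b (p 0) - CLV ω d b (p n) + Kc * ∑ i ∈ Finset.range n, h i ^ 2 := by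
      intro n
      induction n with
      | zero => simp
      | succ n ih =>
        rw [Finset.sum_range_succ, Finset.sum_range_succ]
        have h1 := hstep n b hb
        have h2 := hmono (p n) (hp n) b hb
        have h3 : ∑ k, d (ω k) * ((c (p n) k - c b k) * (p n k - b k)) =
            ∑ k, d (ω k) * (c (p n) k * (p n k - b k)) - ∑ k, d (ω k) * (c b k * (p n k - b k)) := by
          rw [← Finset.sum_sub_distrib]
          exact Finset.sum_congr rfl fun k _ => by ring
        rw [h3] at h2
        have h4 := mul_nonneg (hh n).le h2
        nlinarith
    have := e2 (n + 1)
    have h5 := CLV_nonneg hd hb (hp (n + 1)) (hp0 (n + 1))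
    linarith
  have hrhs : Tendsto (fun n => (CLV ω d b (p 0) + Kc * ∑ i ∈ Finset.range (n + 1), h i ^ 2)
      / H (n + 1)) atTop (𝓝 0) := by
    have hlo : (fun n => h n ^ 2) =o[atTop] h := by
      have : (fun n => h n * h n) =o[atTop] fun n => 1 * h n :=
        ((Asymptotics.isLittleO_one_iff ℝ).2 hh0).mul_isBigO (Asymptotics.isBigO_refl _ _)
      simpa [sq] using this
    have h1 := (hlo.sum_range (fun i => (hh i).le) hsum).tendsto_div_nhds_zero
    have h2 : Tendsto (fun n => CLV ω d b (p 0) / H n + Kc *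
        ((∑ i ∈ Finset.range n, h i ^ 2) / H n)) atTop (𝓝 0) := by
      simpa using (hsum.const_div_atTop (CLV ω d b (p 0))).add (h1.const_mul Kc)
    refine (h2.comp (tendsto_add_atTop_nat 1)).congr fun n => ?_
    simp only [Function.comp]
    ring
  have hl : Tendsto (fun n => ∑ k, d (ω k) * (c b k * (pb (φ n) k - b k))) atTop
      (𝓝 (∑ k, d (ω k) * (c b k * (a k - b k)))) :=
    tendsto_finsetSum _ fun k _ =>
      ((((tendsto_pi_nhds.1 hlim) k).sub_const _).const_mul _).const_mul _
  exact le_of_tendsto_of_tendsto' hl (hrhs.comp hφ.tendsto_atTop) fun n => hbound (φ n)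

lemma CL_conv (hd : ∀ w, 0 < d w) {c : (K → ℝ) → K → ℝ}
    (hcc : ContinuousOn c (CLP ω)) {C : ℝ} (hC : 0 < C)
    (hcoco : ∀ a ∈ CLP ω, ∀ b ∈ CLP ω, ∀ k, (c a k - c b k) ^ 2 ≤
      C * ∑ k, d (ω k) * ((c a k - c b k) * (a k - b k)))
    {p : ℕ → K → ℝ} (hp : ∀ t, p t ∈ CLP ω) (hp0 : ∀ t k, 0 < p t k)
    {h : ℕ → ℝ} (hh : ∀ t, 0 < h t) (hh0 : Tendsto h atTop (𝓝 0))
    (hsum : Tendsto (fun n => ∑ i ∈ Finset.range n, h i) atTop atTop)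
    (hstep : ∀ t, ∀ a ∈ CLP ω, ∀ m : W → ℝ, (∀ k, |h t * (c (p t) k - m (ω k))| ≤ 1) →
      CLV ω d a (p (t + 1)) ≤ CLV ω d a (p t)
      - h t * ∑ k, d (ω k) * (c (p t) k * (p t k - a k))
      + h t ^ 2 * ∑ k, d (ω k) * (p t k * (c (p t) k - m (ω k)) ^ 2))
    {a : K → ℝ} (ha : a ∈ CLP ω) {m : W → ℝ} (hm : ∀ k, m (ω k) ≤ c a k)
    (hm0 : ∀ k, a k * (c a k - m (ω k)) = 0) :
    ∃ b ∈ CLP ω, (∀ k, m (ω k) ≤ c b k) ∧ (∀ k, b k * (c b k - m (ω k)) = 0) ∧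
      Tendsto p atTop (𝓝 b) := by
  -- uniform bound
  obtain ⟨M, hM⟩ := CLP_compact.exists_bound_of_continuousOn hcc
  have hMk : ∀ b ∈ CLP ω, ∀ k, |c b k| ≤ M := fun b hb k =>
    (norm_le_pi_norm (c b) k).trans (hM b hb)
  have hM0 : 0 ≤ M := (norm_nonneg _).trans (hM a ha)
  set B : ℝ := M + ∑ k, |m (ω k)| with hB
  have hmB : ∀ k, |m (ω k)| ≤ ∑ k, |m (ω k)| := fun k =>
    Finset.single_le_sum (f := fun k => |m (ω k)|) (fun _ _ => abs_nonneg _) (Finset.mem_univ k)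
  have hBk : ∀ b ∈ CLP ω, ∀ k, |c b k - m (ω k)| ≤ B := fun b hb k =>
    (abs_sub _ _).trans (add_le_add (hMk b hb k) (hmB k))
  have hB0 : 0 ≤ B := add_nonneg hM0 (Finset.sum_nonneg fun _ _ => abs_nonneg _)
  set N : ℝ := ∑ k, d (ω k) with hN
  have hN0 : 0 ≤ N := Finset.sum_nonneg fun _ _ => (hd _).le
  -- the two parts of the decrease, w.r.t. a solution b
  set φ : (K → ℝ) → (K → ℝ) → ℝ := fun b x =>
    ∑ k, d (ω k) * ((c x k - c b k) * (x k - b k)) + ∑ k, d (ω k) * (x k * (c b k - m (ω k))) with hφ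
  have hδ : ∀ x ∈ CLP ω, ∀ b ∈ CLP ω, 0 ≤ ∑ k, d (ω k) * ((c x k - c b k) * (x k - b k)) := by
    intro x hx b hb
    by_cases hK : Nonempty K
    · obtain ⟨k⟩ := hK
      exact nonneg_of_mul_nonneg_right ((sq_nonneg _).trans (hcoco x hx b hb k)) hC
    · rw [not_nonempty_iff] at hK
      simp
  have hgap : ∀ x ∈ CLP ω, ∀ b : K → ℝ, (∀ k, m (ω k) ≤ c b k) →
      0 ≤ ∑ k, d (ω k) * (x k * (c b k - m (ω k))) := fun x hx b hb =>
    Finset.sum_nonneg fun k _ => mul_nonneg (hd _).le (mul_nonneg (hx.1 k) (by linarith [hb k]))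
  set Q : ℝ := 2 * N * C + 2 * B with hQ
  have hQ0 : 0 ≤ Q := by positivity
  -- eventual decrease
  obtain ⟨T, hT⟩ : ∃ T, ∀ t ≥ T, h t * B ≤ 1 ∧ h t * Q ≤ 1 / 2 := by
    have h1 : Tendsto (fun t => h t * B) atTop (𝓝 0) := by simpa using hh0.mul_const B
    have h2 : Tendsto (fun t => h t * Q) atTop (𝓝 0) := by simpa using hh0.mul_const Q
    exact eventually_atTop.1 ((h1.eventually (ge_mem_nhds zero_lt_one)).and
      (h2.eventually (ge_mem_nhds (by norm_num))))
  have hdec : ∀ b ∈ CLP ω, (∀ k, m (ω k) ≤ c b k) → (∀ k, b k * (c b k - m (ω k)) = 0) →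
      ∀ t ≥ T, CLV ω d b (p (t + 1)) ≤ CLV ω d b (p t) - h t / 2 * φ b (p t) := by
    intro b hb hmb hmb0 t ht
    have h1 := hstep t b hb m (fun k => by
      rw [abs_mul, abs_of_pos (hh t)]
      exact (mul_le_mul_of_nonneg_left (hBk _ (hp t) k) (hh t).le).trans (hT t ht).1)
    have e1 : ∑ k, d (ω k) * (c (p t) k * (p t k - b k)) = φ b (p t) := by
      have h2 := CLP_sum (hp t) (fun w => d w * m w)
      have h3 := CLP_sum hb (fun w => d w * m w)
      have h4 : ∑ k, d (ω k) * m (ω k) * (p t k - b k) = 0 := by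
        simp only [mul_sub, Finset.sum_sub_distrib]
        linarith
      simp only [hφ]
      rw [← sub_eq_zero, ← Finset.sum_add_distrib, ← Finset.sum_sub_distrib, ← h4]
      refine Finset.sum_congr rfl fun k _ => ?_
      linear_combination (-d (ω k)) * hmb0 k
    have e2 : ∑ k, d (ω k) * (p t k * (c (p t) k - m (ω k)) ^ 2) ≤ Q * φ b (p t) := by
      have hterm : ∀ k, d (ω k) * (p t k * (c (p t) k - m (ω k)) ^ 2) ≤
          d (ω k) * (2 * C * ∑ k, d (ω k) * ((c (p t) k - c b k) * (p t k - b k)))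
          + 2 * B * (d (ω k) * (p t k * (c b k - m (ω k)))) := by
        intro k
        have i1 := hcoco (p t) (hp t) b hb k
        have i2 : (c b k - m (ω k)) ^ 2 ≤ B * (c b k - m (ω k)) := by
          rw [sq]
          exact mul_le_mul_of_nonneg_right ((le_abs_self _).trans (hBk b hb k))
            (by linarith [hmb k])
        have i3 : (c (p t) k - m (ω k)) ^ 2 ≤ 2 * (c (p t) k - c b k) ^ 2
            + 2 * (c b k - m (ω k)) ^ 2 := by
          nlinarith [sq_nonneg ((c (p t) k - c b k) - (c b k - m (ω k)))]
        set S := ∑ k, d (ω k) * ((c (p t) k - c b k) * (p t k - b k))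
        have i4 : p t k * (c (p t) k - m (ω k)) ^ 2 ≤
            p t k * (2 * (C * S)) + p t k * (2 * (B * (c b k - m (ω k)))) := by
          rw [← mul_add]
          exact mul_le_mul_of_nonneg_left (by linarith) (hp0 t k).le
        have i5 : p t k * (2 * (C * S)) ≤ 1 * (2 * (C * S)) :=
          mul_le_mul_of_nonneg_right (CLP_le_one (hp t) k)
            (by have := (sq_nonneg _).trans i1; linarith)
        have i6 := mul_le_mul_of_nonneg_left (i4.trans (add_le_add_left i5 _)) (hd (ω k)).le
        refine i6.trans (le_of_eq ?_)
        ring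
      refine (Finset.sum_le_sum fun k _ => hterm k).trans ?_
      rw [Finset.sum_add_distrib, ← Finset.sum_mul, ← Finset.mul_sum, ← hN, hφ, hQ]
      have i7 := hδ (p t) (hp t) b hb
      have i8 := hgap (p t) (hp t) b hmb
      simp only []
      have i9 : 0 ≤ 2 * N * C := by positivity
      nlinarith [mul_nonneg i9 i8, mul_nonneg hB0 i7]
    have hφ0 : 0 ≤ φ b (p t) := add_nonneg (hδ _ (hp t) b hb) (hgap _ (hp t) b hmb)
    rw [e1] at h1
    have h5 : h t ^ 2 * ∑ k, d (ω k) * (p t k * (c (p t) k - m (ω k)) ^ 2) ≤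
        h t / 2 * φ b (p t) := by
      calc _ ≤ h t ^ 2 * (Q * φ b (p t)) := mul_le_mul_of_nonneg_left e2 (sq_nonneg _)
        _ = (h t * Q) * (h t * φ b (p t)) := by ring
        _ ≤ 1 / 2 * (h t * φ b (p t)) :=
          mul_le_mul_of_nonneg_right (hT t ht).2 (mul_nonneg (hh t).le hφ0)
        _ = _ := by ring
    linarith
  -- φ a (p t) frequently small
  have hfreq : ∀ n : ℕ, ∃ t, n ≤ t ∧ φ a (p t) < 1 / ((n : ℝ) + 1) := by
    intro n
    by_contra hcon
    push Not at hcon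
    set ε : ℝ := 1 / ((n : ℝ) + 1) with hε
    have hεpos : 0 < ε := by positivity
    set T' := max n T with hT'
    have hsumle : ∀ j, ε / 2 * ∑ i ∈ Finset.range j, h (T' + i) ≤
        CLV ω d a (p T') - CLV ω d a (p (T' + j)) := by
      intro j
      induction j with
      | zero => simp
      | succ j ih =>
        rw [Finset.sum_range_succ]
        have h1 := hdec a ha hm hm0 (T' + j) (by omega)
        have h2 := hcon (T' + j) (by omega)
        have h3 := mul_le_mul_of_nonneg_left h2 (hh (T' + j)).le
        have : T' + (j + 1) = T' + j + 1 := by ring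
        rw [this]
        linarith
    have hbd : ∀ j, ∑ i ∈ Finset.range j, h (T' + i) ≤ CLV ω d a (p T') / (ε / 2) := by
      intro j
      rw [le_div_iff₀ (by positivity)]
      have := CLV_nonneg hd ha (hp (T' + j)) (hp0 (T' + j))
      linarith [hsumle j]
    have h4 := (hsum.comp (tendsto_add_atTop_nat T')).eventually
      (eventually_gt_atTop (CLV ω d a (p T') / (ε / 2) + ∑ i ∈ Finset.range T', h i))
    obtain ⟨j, hj⟩ := h4.exists
    simp only [Function.comp] at hj
    rw [add_comm j T', Finset.sum_range_add] at hj
    linarith [hbd j]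
  choose σ hσ1 hσ2 using hfreq
  obtain ⟨b, hb, ψ, hψ, hlim⟩ := CLP_compact.tendsto_subseq (fun n => hp (σ n))
  have hσt : Tendsto (fun n => σ (ψ n)) atTop atTop :=
    tendsto_atTop_mono (fun n => (hψ.id_le n).trans (hσ1 (ψ n))) tendsto_id
  have hcl : Tendsto (fun n => c (p (σ (ψ n)))) atTop (𝓝 (c b)) :=
    (hcc b hb).tendsto.comp (tendsto_nhdsWithin_iff.2 ⟨hlim, Eventually.of_forall fun n => hp _⟩)
  have hφlim : Tendsto (fun n => φ a (p (σ (ψ n)))) atTop (𝓝 (φ a b)) := by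
    have hl := tendsto_pi_nhds.1 hlim
    have hcl' := tendsto_pi_nhds.1 hcl
    refine Tendsto.add (tendsto_finsetSum _ fun k _ => ?_) (tendsto_finsetSum _ fun k _ => ?_)
    · exact (((hcl' k).sub_const _).mul ((hl k).sub_const _)).const_mul _
    · exact ((hl k).mul_const _).const_mul _
  have hφle : φ a b ≤ 0 := by
    have h1 : Tendsto (fun n : ℕ => 1 / ((ψ n : ℝ) + 1)) atTop (𝓝 0) :=
      (tendsto_one_div_add_atTop_nhds_zero_nat (𝕜 := ℝ)).comp hψ.tendsto_atTop
    exact le_of_tendsto_of_tendsto' hφlim h1 fun n => (hσ2 (ψ n)).le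
  have hδb := hδ b hb a ha
  have hgb := hgap b hb a hm
  have hδ0 : ∑ k, d (ω k) * ((c b k - c a k) * (b k - a k)) = 0 := by
    simp only [hφ] at hφle; linarith
  have hg0 : ∑ k, d (ω k) * (b k * (c a k - m (ω k))) = 0 := by
    simp only [hφ] at hφle; linarith
  have hceq : ∀ k, c b k = c a k := by
    intro k
    have := hcoco b hb a ha k
    rw [hδ0, mul_zero] at this
    have := pow_eq_zero_iff (two_ne_zero) |>.1 (le_antisymm this (sq_nonneg _))
    linarith
  have hbm : ∀ k, m (ω k) ≤ c b k := fun k => by rw [hceq k]; exact hm k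
  have hbm0 : ∀ k, b k * (c b k - m (ω k)) = 0 := by
    intro k
    rw [hceq k]
    rw [Finset.sum_eq_zero_iff_of_nonneg] at hg0
    · exact (mul_eq_zero.1 (hg0 k (Finset.mem_univ k))).resolve_left (hd _).ne'
    · exact fun k _ => mul_nonneg (hd _).le (mul_nonneg (hb.1 k) (by linarith [hm k]))
  refine ⟨b, hb, hbm, hbm0, CLV_tendsto hd hb hp hp0 ?_⟩
  have hanti : ∀ t ≥ T, CLV ω d b (p (t + 1)) ≤ CLV ω d b (p t) := by
    intro t ht
    have h1 := hdec b hb hbm hbm0 t ht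
    have hφ0 : 0 ≤ φ b (p t) := add_nonneg (hδ _ (hp t) b hb) (hgap _ (hp t) b hbm)
    have h2 := mul_nonneg (half_pos (hh t)).le hφ0
    linarith
  have hVs : Tendsto (fun n => CLV ω d b (p (σ (ψ n)))) atTop (𝓝 0) := CLV_tendsto_self hlim
  rw [Metric.tendsto_atTop]
  intro ε hε
  obtain ⟨n, hn1, hn2⟩ := ((hVs.eventually (gt_mem_nhds hε)).and
    (hσt.eventually (eventually_ge_atTop T))).exists
  refine ⟨σ (ψ n), fun t ht => ?_⟩
  rw [Real.dist_eq, sub_zero, abs_of_nonneg (CLV_nonneg hd hb (hp t) (hp0 t))]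
  refine lt_of_le_of_lt ?_ hn1
  induction t, ht using Nat.le_induction with
  | base => exact le_rfl
  | succ t ht ih => exact (hanti t (hn2.trans ht)).trans ih

end dyn

theorem stmt_7
    {W K E : Type*} [Fintype W] [Fintype K] [Fintype E]
    [DecidableEq W] [DecidableEq E]
    [Nonempty W] [Nonempty K]
    (ω : K → W) (hω : Function.Surjective ω)
    (Λ : E → K → ℝ) (hΛ : ∀ e k, Λ e k = 0 ∨ Λ e k = 1)
    (d : W → ℝ) (hd : ∀ w, 0 < d w)
    (u : (E → ℝ) → (E → ℝ))
    (P : Set (K → ℝ))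
    (hP : P = {p : K → ℝ | (∀ k, 0 ≤ p k) ∧
      ∀ w, ∑ k ∈ Finset.univ.filter (fun k => ω k = w), p k = 1})
    (Λbar : E → K → ℝ) (hΛbar : ∀ e k, Λbar e k = d (ω k) * Λ e k)
    (c : (K → ℝ) → K → ℝ)
    (hc : ∀ p k, c p k = ∑ e, Λ e k * u (fun e' => ∑ k', Λbar e' k' * p k') e)
    (X : Set (E → ℝ)) (hX : X = (fun p e => ∑ k, Λbar e k * p k) '' P)
    (hu1 : ∃ U : Set (E → ℝ), IsOpen U ∧ X ⊆ U ∧ ContDiffOn ℝ 2 u U)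
    (hu2 : ∀ x ∈ X,
      (∀ v : E → ℝ, 0 ≤ ∑ i, ∑ j, v i * (fderiv ℝ u x (Pi.single j (1 : ℝ)) i) * v j) ∧
      (∀ v : E → ℝ, 0 ≤ ∑ i, ∑ j,
        v i * (∑ m, fderiv ℝ u x (Pi.single m (1 : ℝ)) i *
          fderiv ℝ u x (Pi.single j (1 : ℝ)) m) * v j))
    (q : ℝ → (K → ℝ) → K → ℝ)
    (hq : ∀ (rr : ℝ) (ss : K → ℝ) (k : K),
      q rr ss k = Real.exp (-rr * ss k) /
        ∑ k' ∈ Finset.univ.filter (fun k' => ω k' = ω k), Real.exp (-rr * ss k'))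
    (Pstar : Set (K → ℝ))
    (hPstar : Pstar = {ps ∈ P | ∀ pp ∈ P, 0 ≤ ∑ k, c ps k * (pp k - ps k)})
    (r : ℝ) (hr : 0 < r)
    (η : ℕ → ℝ) (hη : ∀ t, 0 < η t)
    (s : ℕ → K → ℝ) (p : ℕ → K → ℝ)
    (hp : ∀ t, p t = q r (s t))
    (hs : ∀ t, s (t + 1) = fun k => s t k + η t * c (p t) k)
    (hη0 : Tendsto η atTop (nhds 0))
    (hηsum : Tendsto (fun t => ∑ i ∈ Finset.range (t + 1), η i) atTop atTop) :
    ∃ pstar ∈ Pstar, Tendsto p atTop (nhds pstar) := by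
  subst hP
  have hXimg : X = (fun p e => ∑ k, Λbar e k * p k) '' CLP ω := hX
  have hlinc : Continuous (fun (p : K → ℝ) (e : E) => ∑ k, Λbar e k * p k) := by fun_prop
  have hXc : IsCompact X := by
    rw [hXimg]; exact CLP_compact.image hlinc
  have hXmem : ∀ a ∈ CLP ω, (fun e => ∑ k, Λbar e k * a k) ∈ X := fun a ha => by
    rw [hXimg]; exact ⟨a, ha, rfl⟩
  have hXv : Convex ℝ X := by
    rw [hXimg]
    refine CLP_convex.is_linear_image ⟨fun a b => ?_, fun t a => ?_⟩
    · ext e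
      simp [mul_add, Finset.sum_add_distrib]
    · ext e
      simp only [Pi.smul_apply, smul_eq_mul, Finset.mul_sum]
      exact Finset.sum_congr rfl fun k _ => by ring
  obtain ⟨U, hU, hXU, hu⟩ := hu1
  obtain ⟨C, hC, hcoco⟩ := CL_coco hXc hXv hU hXU hu hu2
  -- continuity of the route costs
  have hcc : ContinuousOn c (CLP ω) := by
    have h1 : ContinuousOn (fun a : K → ℝ => u (fun e => ∑ k, Λbar e k * a k)) (CLP ω) :=
      (hu.continuousOn.mono hXU).comp hlinc.continuousOn hXmem
    have h2 := continuousOn_pi.1 h1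
    refine continuousOn_pi.2 fun k => ?_
    refine ContinuousOn.congr (f := fun a => ∑ e, Λ e k * u (fun e' => ∑ k', Λbar e' k' * a k') e)
      ?_ (fun a _ => hc a k)
    exact continuousOn_finsetSum _ fun e _ => continuousOn_const.mul (h2 e)
  -- co-coercivity of the route costs
  have hid : ∀ a b : K → ℝ, ∑ k, d (ω k) * ((c a k - c b k) * (a k - b k)) =
      ∑ e, (u (fun e => ∑ k, Λbar e k * a k) e - u (fun e => ∑ k, Λbar e k * b k) e) *
        (∑ k, Λbar e k * a k - ∑ k, Λbar e k * b k) := by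
    intro a b
    simp only [hc, ← Finset.sum_sub_distrib, ← mul_sub, Finset.mul_sum, Finset.sum_mul]
    rw [Finset.sum_comm]
    refine Finset.sum_congr rfl fun e _ => Finset.sum_congr rfl fun k _ => ?_
    rw [hΛbar]
    ring
  have hcoc : ∀ a ∈ CLP ω, ∀ b ∈ CLP ω, ∀ k, (c a k - c b k) ^ 2 ≤
      ((Fintype.card E + 1) * C) * ∑ k, d (ω k) * ((c a k - c b k) * (a k - b k)) := by
    intro a ha b hb k
    have h1 := hcoco _ (hXmem a ha) _ (hXmem b hb)
    rw [hid a b]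
    set ua := u (fun e => ∑ k, Λbar e k * a k)
    set ub := u (fun e => ∑ k, Λbar e k * b k)
    have h2 : c a k - c b k = ∑ e, Λ e k * (ua e - ub e) := by
      simp only [hc, mul_sub, Finset.sum_sub_distrib]
      rfl
    have h3 : (∑ e, Λ e k * (ua e - ub e)) ^ 2 ≤
        Fintype.card E * ∑ e, (Λ e k * (ua e - ub e)) ^ 2 := by
      simpa using sq_sum_le_card_mul_sum_sq (s := Finset.univ) (f := fun e => Λ e k * (ua e - ub e))
    have h4 : ∑ e, (Λ e k * (ua e - ub e)) ^ 2 ≤ ∑ e, (ua e - ub e) ^ 2 := by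
      refine Finset.sum_le_sum fun e _ => ?_
      rcases hΛ e k with h | h
      · rw [h]; simpa using sq_nonneg (ua e - ub e)
      · rw [h, one_mul]
    have h5 : 0 ≤ ∑ e, (ua e - ub e) ^ 2 := Finset.sum_nonneg fun _ _ => sq_nonneg _
    rw [h2, mul_assoc]
    have hE : (0 : ℝ) ≤ Fintype.card E := by positivity
    calc _ ≤ _ := h3
      _ ≤ Fintype.card E * ∑ e, (ua e - ub e) ^ 2 := mul_le_mul_of_nonneg_left h4 hE
      _ ≤ (Fintype.card E + 1) * ∑ e, (ua e - ub e) ^ 2 :=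
        mul_le_mul_of_nonneg_right (by linarith) h5
      _ ≤ _ := mul_le_mul_of_nonneg_left h1 (by linarith)
  have hC' : 0 < ((Fintype.card E + 1) * C) := by positivity
  have hmono : ∀ a ∈ CLP ω, ∀ b ∈ CLP ω,
      0 ≤ ∑ k, d (ω k) * ((c a k - c b k) * (a k - b k)) := fun a ha b hb => by
    obtain ⟨k⟩ := (inferInstance : Nonempty K)
    exact nonneg_of_mul_nonneg_right ((sq_nonneg _).trans (hcoc a ha b hb k)) hC'
  have hZpos : ∀ t w, 0 < ∑ k' ∈ Finset.univ.filter (fun k' => ω k' = w),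
      Real.exp (-r * s t k') := by
    intro t w
    obtain ⟨k, hk⟩ := hω w
    exact Finset.sum_pos (fun _ _ => Real.exp_pos _) ⟨k, by simp [hk]⟩
  have hpk : ∀ t k, p t k = Real.exp (-r * s t k) /
      ∑ k' ∈ Finset.univ.filter (fun k' => ω k' = ω k), Real.exp (-r * s t k') := fun t k => by
    rw [hp t, hq]
  have hp0 : ∀ t k, 0 < p t k := fun t k => by
    rw [hpk]; exact div_pos (Real.exp_pos _) (hZpos t _)
  have hpP : ∀ t, p t ∈ CLP ω := by
    refine fun t => ⟨fun k => (hp0 t k).le, fun w => ?_⟩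
    rw [← div_self (hZpos t w).ne', Finset.sum_div]
    refine Finset.sum_congr rfl fun k hk => ?_
    rw [hpk, (Finset.mem_filter.1 hk).2]
  set h : ℕ → ℝ := fun t => r * η t with hh
  have hhpos : ∀ t, 0 < h t := fun t => mul_pos hr (hη t)
  have hh0 : Tendsto h atTop (𝓝 0) := by simpa using hη0.const_mul r
  have hhsum : Tendsto (fun n => ∑ i ∈ Finset.range n, h i) atTop atTop := by
    have h1 : Tendsto (fun n => ∑ i ∈ Finset.range n, η i) atTop atTop :=
      (tendsto_add_atTop_iff_nat 1).1 hηsum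
    have h2 := h1.const_mul_atTop hr
    simpa only [hh, Finset.mul_sum] using h2
  have hupd : ∀ t k, p (t + 1) k = p t k * Real.exp (-h t * c (p t) k) /
      ∑ k' ∈ Finset.univ.filter (fun k' => ω k' = ω k),
        p t k' * Real.exp (-h t * c (p t) k') := by
    intro t k
    have e1 : ∀ k, Real.exp (-r * s (t + 1) k) =
        Real.exp (-r * s t k) * Real.exp (-h t * c (p t) k) := fun k => by
      rw [← Real.exp_add, hs t]
      congr 1
      simp only [hh]
      ring
    have e2 : ∑ k' ∈ Finset.univ.filter (fun k' => ω k' = ω k),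
        p t k' * Real.exp (-h t * c (p t) k') =
        (∑ k' ∈ Finset.univ.filter (fun k' => ω k' = ω k), Real.exp (-r * s (t + 1) k')) /
        ∑ k' ∈ Finset.univ.filter (fun k' => ω k' = ω k), Real.exp (-r * s t k') := by
      rw [Finset.sum_div]
      refine Finset.sum_congr rfl fun k' hk' => ?_
      rw [hpk t k', (Finset.mem_filter.1 hk').2, e1]
      ring
    rw [e2, hpk (t + 1) k, hpk t k, e1 k]
    have z1 := (hZpos t (ω k)).ne'
    have z2 := (hZpos (t + 1) (ω k)).ne'
    generalize (∑ k' ∈ Finset.univ.filter (fun k' => ω k' = ω k), Real.exp (-r * s t k')) = Z1 at *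
    generalize (∑ k' ∈ Finset.univ.filter (fun k' => ω k' = ω k),
      Real.exp (-r * s (t + 1) k')) = Z2 at *
    field_simp
  have hstep : ∀ t, ∀ a ∈ CLP ω, ∀ m : W → ℝ, (∀ k, |h t * (c (p t) k - m (ω k))| ≤ 1) →
      CLV ω d a (p (t + 1)) ≤ CLV ω d a (p t)
      - h t * ∑ k, d (ω k) * (c (p t) k * (p t k - a k))
      + h t ^ 2 * ∑ k, d (ω k) * (p t k * (c (p t) k - m (ω k)) ^ 2) :=
    fun t a ha m hm => CL_step hω hd ha (hpP t) (hp0 t) (h t) m (hupd t) hm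
  -- existence of an equilibrium
  obtain ⟨M, hM⟩ := CLP_compact.exists_bound_of_continuousOn hcc
  have hMk : ∀ b ∈ CLP ω, ∀ k, |c b k| ≤ M := fun b hb k =>
    (norm_le_pi_norm (c b) k).trans (hM b hb)
  obtain ⟨T, hT⟩ : ∃ T, ∀ t ≥ T, h t * M ≤ 1 := by
    have h1 : Tendsto (fun t => h t * M) atTop (𝓝 0) := by simpa using hh0.mul_const M
    exact eventually_atTop.1 (h1.eventually (ge_mem_nhds zero_lt_one))
  have hsumT : Tendsto (fun n => ∑ i ∈ Finset.range n, h (T + i)) atTop atTop := by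
    have h1 := tendsto_atTop_add_const_right _ (-∑ i ∈ Finset.range T, h i)
      (hhsum.comp (tendsto_add_atTop_nat T))
    refine h1.congr fun n => ?_
    simp only [Function.comp]
    rw [add_comm n T, Finset.sum_range_add]
    ring
  obtain ⟨a, ha, m, hm, hm0⟩ := CL_exists (p := fun t => p (T + t)) (h := fun t => h (T + t))
    hd hcc hmono (fun t => hpP _) (fun t => hp0 _) (fun t => hhpos _)
    (by simpa only [add_comm T, Function.comp_def] using hh0.comp (tendsto_add_atTop_nat T)) hsumT
    ((∑ k, d (ω k)) * M ^ 2) (by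
      intro t a ha
      have h1 := hstep (T + t) a ha (fun _ => 0) (fun k => by
        rw [sub_zero, abs_mul, abs_of_pos (hhpos _)]
        exact (mul_le_mul_of_nonneg_left (hMk _ (hpP _) k) (hhpos _).le).trans
          (hT _ (Nat.le_add_right T t)))
      have h2 : ∑ k, d (ω k) * (p (T + t) k * (c (p (T + t)) k - 0) ^ 2) ≤
          (∑ k, d (ω k)) * M ^ 2 := by
        rw [Finset.sum_mul]
        refine Finset.sum_le_sum fun k _ => mul_le_mul_of_nonneg_left ?_ (hd _).le
        rw [sub_zero, ← one_mul (M ^ 2), ← sq_abs]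
        exact mul_le_mul (CLP_le_one (hpP _) k)
          (pow_le_pow_left₀ (abs_nonneg _) (hMk _ (hpP _) k) 2) (by positivity) zero_le_one
      have h3 := mul_le_mul_of_nonneg_left h2 (sq_nonneg (h (T + t)))
      have e : T + (t + 1) = T + t + 1 := by ring
      simp only [e]
      linarith)
  obtain ⟨b, hb, hbm, hbm0, hlim⟩ := CL_conv hd hcc hC' hcoc hpP hp0 hhpos hh0 hhsum hstep ha hm hm0
  refine ⟨b, ?_, hlim⟩
  rw [hPstar]
  refine ⟨hb, fun pp hpp => ?_⟩
  have h1 := CLP_sum (show pp ∈ CLP ω from hpp) m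
  have h2 := CLP_sum hb m
  have h3 : ∑ k, c b k * (pp k - b k) = ∑ k, pp k * (c b k - m (ω k)) := by
    have h4 : ∑ k, m (ω k) * (pp k - b k) = 0 := by
      simp only [mul_sub, Finset.sum_sub_distrib]
      linarith
    rw [← sub_eq_zero, ← Finset.sum_sub_distrib, ← h4]
    refine Finset.sum_congr rfl fun k _ => ?_
    linear_combination (-1) * hbm0 k
  rw [h3]
  exact Finset.sum_nonneg fun k _ => mul_nonneg (hpp.1 k) (by linarith [hbm k])
end

section
/- Under Assumptions 1 and 2, let L > 0 be such that c is 1/(4L)-cocoercive on P. Suppose the initial valuation satisfies s^0 ∈ ℝ^K (all entries finite) and the step sizes are constant, η^t = η for all t ≥ 0, with 0 < η < 1/(2 r L). Then the CumLog sequence p^t converges (in ℝ^K) to a point p* belonging to P*. -/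
open Finset Filter Topology

namespace CumLogAux

lemma klpt (a b : ℝ) (ha0 : 0 ≤ a) (ha1 : a ≤ 1) (hb0 : 0 < b) (hb1 : b ≤ 1) :
    (a - b) ^ 2 / 2 ≤ a * Real.log a - a * Real.log b - a + b := by
  rcases ha0.eq_or_lt with rfl | ha
  · simp; nlinarith
  let f : ℝ → ℝ := fun x => a * Real.log a - a * Real.log x - a + x - (a - x) ^ 2 / 2
  have hd : ∀ x : ℝ, 0 < x → HasDerivAt f ((x - a) * (1 / x - 1)) x := by
    intro x hx
    have h1 := (Real.hasDerivAt_log hx.ne').const_mul a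
    have h2 := (((hasDerivAt_id x).const_sub a).pow 2).div_const 2
    have h3 := ((((h1.const_sub (a * Real.log a)).sub_const a).add (hasDerivAt_id x)).sub h2)
    refine HasDerivAt.congr_deriv (f := f) h3 ?_
    simp only [id]
    field_simp
    ring
  have hfa : f a = 0 := by simp [f]
  have key : 0 ≤ f b := by
    rw [← hfa]
    rcases le_total a b with hab | hab
    · have hm : MonotoneOn f (Set.Icc a b) := by
        apply monotoneOn_of_deriv_nonneg (convex_Icc a b)
        · intro x hx
          exact (hd x (ha.trans_le hx.1)).continuousAt.continuousWithinAt
        · intro x hx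
          rw [interior_Icc] at hx
          exact (hd x (ha.trans hx.1)).differentiableAt.differentiableWithinAt
        · intro x hx
          rw [interior_Icc] at hx
          have hx0 := ha.trans hx.1
          rw [(hd x hx0).deriv]
          apply mul_nonneg (by linarith [hx.1])
          rw [sub_nonneg, le_div_iff₀ hx0]; linarith [hx.2]
      exact hm ⟨le_rfl, hab⟩ ⟨hab, le_rfl⟩ hab
    · have hm : AntitoneOn f (Set.Icc b a) := by
        apply antitoneOn_of_deriv_nonpos (convex_Icc b a)
        · intro x hx
          exact (hd x (hb0.trans_le hx.1)).continuousAt.continuousWithinAt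
        · intro x hx
          rw [interior_Icc] at hx
          exact (hd x (hb0.trans hx.1)).differentiableAt.differentiableWithinAt
        · intro x hx
          rw [interior_Icc] at hx
          have hx0 := hb0.trans hx.1
          rw [(hd x hx0).deriv]
          apply mul_nonpos_of_nonpos_of_nonneg (by linarith [hx.2])
          rw [sub_nonneg, le_div_iff₀ hx0]; linarith [hx.2]
      exact hm ⟨le_rfl, hab⟩ ⟨hab, le_rfl⟩ hab
  simp only [f] at key
  linarith

section
variable {W K : Type*} [Fintype W] [Fintype K] [DecidableEq W]

def Pset (ω : K → W) : Set (K → ℝ) := {p : K → ℝ | (∀ k, 0 ≤ p k) ∧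
      ∀ w, ∑ k ∈ Finset.univ.filter (fun k => ω k = w), p k = 1}

noncomputable def logit (ω : K → W) (r : ℝ) (s : K → ℝ) (k : K) : ℝ :=
  Real.exp (-r * s k) /
        ∑ k' ∈ Finset.univ.filter (fun k' => ω k' = ω k), Real.exp (-r * s k')

noncomputable def KL (a b : K → ℝ) : ℝ := ∑ k, (a k * Real.log (a k) - a k * Real.log (b k))

lemma Pset_le_one {ω : K → W} {p : K → ℝ} (hp : p ∈ Pset ω) (k : K) : p k ≤ 1 := by
  rw [← hp.2 (ω k)]
  exact Finset.single_le_sum (f := p) (fun i _ => hp.1 i) (by simp)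

lemma Pset_sum {ω : K → W} {p : K → ℝ} (hp : p ∈ Pset ω) (m : W → ℝ) :
    ∑ k, p k * m (ω k) = ∑ w, m w := by
  rw [← Finset.sum_fiberwise (s := Finset.univ) (g := ω)]
  refine Finset.sum_congr rfl fun w _ => ?_
  calc _ = ∑ k ∈ Finset.univ.filter (fun k => ω k = w), p k * m w := by
        refine Finset.sum_congr rfl fun k hk => ?_
        rw [(Finset.mem_filter.1 hk).2]
    _ = m w := by rw [← Finset.sum_mul, hp.2 w, one_mul]

lemma Pset_sum_one {ω : K → W} {p : K → ℝ} (hp : p ∈ Pset ω) :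
    ∑ k, p k = ∑ _w : W, (1 : ℝ) := by
  simpa using Pset_sum hp (fun _ => 1)

lemma Pset_convex (ω : K → W) : Convex ℝ (Pset ω) := by
  intro x hx y hy a b ha hb hab
  refine ⟨fun k => ?_, fun w => ?_⟩
  · have := hx.1 k; have := hy.1 k
    simp only [Pi.add_apply, Pi.smul_apply, smul_eq_mul]; positivity
  · simp only [Pi.add_apply, Pi.smul_apply, smul_eq_mul, Finset.sum_add_distrib,
      ← Finset.mul_sum, hx.2 w, hy.2 w]
    linarith

lemma Pset_compact (ω : K → W) : IsCompact (Pset ω) := by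
  have hcl : IsClosed (Pset ω) := by
    have h1 : Pset ω = (⋂ k, {p : K → ℝ | 0 ≤ p k}) ∩
      ⋂ w, {p : K → ℝ | ∑ k ∈ Finset.univ.filter (fun k => ω k = w), p k = 1} := by
      ext p; simp [Pset]
    rw [h1]
    apply IsClosed.inter
    · exact isClosed_iInter fun k => isClosed_le continuous_const (by fun_prop)
    · exact isClosed_iInter fun w => isClosed_eq (by fun_prop) continuous_const
  refine (isCompact_univ_pi (fun _ : K => isCompact_Icc (a := (0:ℝ)) (b := 1))).of_isClosed_subset
    hcl ?_
  intro p hp k _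
  exact ⟨hp.1 k, Pset_le_one hp k⟩

lemma Zpos (ω : K → W) (r : ℝ) (s : K → ℝ) (k : K) :
    0 < ∑ k' ∈ Finset.univ.filter (fun k' => ω k' = ω k), Real.exp (-r * s k') :=
  Finset.sum_pos (fun _ _ => Real.exp_pos _) ⟨k, by simp⟩

lemma logit_pos (ω : K → W) (r : ℝ) (s : K → ℝ) (k : K) : 0 < logit ω r s k :=
  div_pos (Real.exp_pos _) (Zpos ω r s k)

lemma logit_mem (ω : K → W) (hω : Function.Surjective ω) (r : ℝ) (s : K → ℝ) :
    logit ω r s ∈ Pset ω := by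
  refine ⟨fun k => (logit_pos ω r s k).le, fun w => ?_⟩
  obtain ⟨k0, rfl⟩ := hω w
  calc _ = ∑ k ∈ Finset.univ.filter (fun k => ω k = ω k0), Real.exp (-r * s k) /
        ∑ k' ∈ Finset.univ.filter (fun k' => ω k' = ω k0), Real.exp (-r * s k') := by
        refine Finset.sum_congr rfl fun k hk => ?_
        rw [logit, (Finset.mem_filter.1 hk).2]
    _ = 1 := by rw [← Finset.sum_div, div_self (Zpos ω r s k0).ne']

lemma KL_ge {ω : K → W} {a b : K → ℝ} (ha : a ∈ Pset ω) (hb : b ∈ Pset ω) (hb0 : ∀ k, 0 < b k) :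
    ∑ k, (a k - b k) ^ 2 / 2 ≤ KL a b := by
  have h1 : ∑ k, (a k - b k) ^ 2 / 2 ≤
      ∑ k, ((a k * Real.log (a k) - a k * Real.log (b k)) - a k + b k) :=
    Finset.sum_le_sum fun k _ => klpt _ _ (ha.1 k) (Pset_le_one ha k) (hb0 k) (Pset_le_one hb k)
  rw [Finset.sum_add_distrib, Finset.sum_sub_distrib, Pset_sum_one ha, Pset_sum_one hb] at h1
  simpa [KL] using h1

lemma KL_nonneg {ω : K → W} {a b : K → ℝ} (ha : a ∈ Pset ω) (hb : b ∈ Pset ω)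
    (hb0 : ∀ k, 0 < b k) : 0 ≤ KL a b :=
  le_trans (Finset.sum_nonneg fun k _ => by positivity) (KL_ge ha hb hb0)

lemma step {ω : K → W} (hω : Function.Surjective ω) (r η : ℝ) (s s' v : K → ℝ)
    (hs : ∀ k, s' k = s k + η * v k) (a : K → ℝ) (ha : a ∈ Pset ω) :
    KL a (logit ω r s') = KL a (logit ω r s) - KL (logit ω r s') (logit ω r s)
      + r * η * ∑ k, v k * (a k - logit ω r s' k) := by
  let Z : (K → ℝ) → W → ℝ := fun s w =>
    ∑ k' ∈ Finset.univ.filter (fun k' => ω k' = w), Real.exp (-r * s k')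
  have hlog : ∀ s k, Real.log (logit ω r s k) = -r * s k - Real.log (Z s (ω k)) := by
    intro s k
    rw [logit, Real.log_div (Real.exp_pos _).ne' (Zpos ω r s k).ne', Real.log_exp]
  let m : W → ℝ := fun w => Real.log (Z s' w) - Real.log (Z s w)
  have main : ∀ a ∈ Pset ω, KL a (logit ω r s') - KL a (logit ω r s) =
      r * η * ∑ k, v k * a k + ∑ w, m w := by
    intro a ha
    rw [← Pset_sum ha m, KL, KL, ← Finset.sum_sub_distrib, Finset.mul_sum,
      ← Finset.sum_add_distrib]
    refine Finset.sum_congr rfl fun k _ => ?_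
    rw [hlog, hlog, hs]
    simp only [m]
    ring
  have h1 := main a ha
  have h2 := main _ (logit_mem ω hω r s')
  have h3 : KL (logit ω r s') (logit ω r s') = 0 := by simp [KL]
  have h4 : ∑ k, v k * (a k - logit ω r s' k) =
    ∑ k, v k * a k - ∑ k, v k * logit ω r s' k := by
    rw [← Finset.sum_sub_distrib]; exact Finset.sum_congr rfl fun k _ => by ring
  rw [h4]
  linarith

lemma exists_approx {ω : K → W} (hω : Function.Surjective ω) (c : (K → ℝ) → K → ℝ)
    (C : ℝ) (hC0 : 0 < C) (hC : ∀ a ∈ Pset ω, ∑ k, (c a k) ^ 2 ≤ C)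
    (hmono : ∀ a ∈ Pset ω, ∀ b ∈ Pset ω, 0 ≤ ∑ k, (c b k - c a k) * (b k - a k))
    (ε : ℝ) (hε : 0 < ε) :
    ∃ b ∈ Pset ω, ∀ a ∈ Pset ω, ∑ k, c a k * (b k - a k) ≤ ε := by
  let θ : ℝ := ε / C
  have hθ : 0 < θ := div_pos hε hC0
  let s : ℕ → K → ℝ := fun n => Nat.rec (fun _ => 0)
    (fun _ s => fun k => s k + θ * c (logit ω 1 s) k) n
  have hs : ∀ t k, s (t+1) k = s t k + θ * c (logit ω 1 (s t)) k := fun t k => rfl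
  let p : ℕ → K → ℝ := fun t => logit ω 1 (s t)
  have hpm : ∀ t, p t ∈ Pset ω := fun t => logit_mem ω hω _ _
  have hpp : ∀ t k, 0 < p t k := fun t k => logit_pos ω _ _ _
  have hstep : ∀ a ∈ Pset ω, ∀ t,
      θ * ∑ k, c a k * (p t k - a k) ≤ KL a (p t) - KL a (p (t+1)) + θ ^ 2 * C / 2 := by
    intro a ha t
    have h1 := step hω 1 θ (s t) (s (t+1)) (c (p t)) (hs t) a ha
    change KL a (p (t+1)) = KL a (p t) - KL (p (t+1)) (p t)
      + 1 * θ * ∑ k, c (p t) k * (a k - p (t+1) k) at h1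
    have h2 := KL_ge (hpm (t+1)) (hpm t) (hpp t)
    have h3 := hmono a ha (p t) (hpm t)
    have h4 := hC (p t) (hpm t)
    have h5 : ∑ k, (c (p t) k - c a k) * (p t k - a k) =
      ∑ k, c (p t) k * (p t k - a k) - ∑ k, c a k * (p t k - a k) := by
      rw [← Finset.sum_sub_distrib]; exact Finset.sum_congr rfl fun k _ => by ring
    have h6 : θ * ∑ k, c (p t) k * (p t k - a k) + θ * ∑ k, c (p t) k * (a k - p (t+1) k)
       ≤ ∑ k, (p (t+1) k - p t k) ^ 2 / 2 + θ ^ 2 / 2 * ∑ k, (c (p t) k) ^ 2 := by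
      rw [Finset.mul_sum, Finset.mul_sum, Finset.mul_sum, ← Finset.sum_add_distrib,
        ← Finset.sum_add_distrib]
      refine Finset.sum_le_sum fun k _ => ?_
      nlinarith [sq_nonneg (θ * c (p t) k + (p (t+1) k - p t k))]
    have h7 : θ * ∑ k, c a k * (p t k - a k) ≤ θ * ∑ k, c (p t) k * (p t k - a k) :=
      mul_le_mul_of_nonneg_left (by linarith) hθ.le
    have h8 : θ ^ 2 / 2 * ∑ k, (c (p t) k) ^ 2 ≤ θ ^ 2 / 2 * C :=
      mul_le_mul_of_nonneg_left h4 (by positivity)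
    linarith
  let M : ℝ := ∑ k, - Real.log (p 0 k)
  have hM : ∀ a ∈ Pset ω, KL a (p 0) ≤ M := by
    intro a ha
    refine Finset.sum_le_sum fun k _ => ?_
    have h1 : a k * Real.log (a k) ≤ 0 :=
      mul_nonpos_of_nonneg_of_nonpos (ha.1 k) (Real.log_nonpos (ha.1 k) (Pset_le_one ha k))
    have h2 : Real.log (p 0 k) ≤ 0 := Real.log_nonpos (hpp 0 k).le (Pset_le_one (hpm 0) k)
    nlinarith [Pset_le_one ha k]
  have hsum : ∀ a ∈ Pset ω, ∀ T : ℕ,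
      ∑ t ∈ Finset.range T, θ * ∑ k, c a k * (p t k - a k) ≤ M + T * (θ ^ 2 * C / 2) := by
    intro a ha T
    have : ∀ T : ℕ, ∑ t ∈ Finset.range T, θ * ∑ k, c a k * (p t k - a k) ≤
        KL a (p 0) - KL a (p T) + T * (θ ^ 2 * C / 2) := by
      intro T
      induction T with
      | zero => simp
      | succ n ih =>
        rw [Finset.sum_range_succ]
        have := hstep a ha n
        push_cast
        linarith
    linarith [this T, hM a ha, KL_nonneg ha (hpm T) (hpp T)]
  obtain ⟨T, hT⟩ := exists_nat_gt (max 0 (2 * M / (θ * ε)))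
  have hT0 : (0:ℝ) < T := (le_max_left _ _).trans_lt hT
  have hTM : 2 * M < T * (θ * ε) := by
    rw [← div_lt_iff₀ (by positivity)]; exact (le_max_right _ _).trans_lt hT
  refine ⟨fun k => (∑ t ∈ Finset.range T, p t k) / T, ⟨fun k => ?_, fun w => ?_⟩, fun a ha => ?_⟩
  · exact div_nonneg (Finset.sum_nonneg fun t _ => (hpp t k).le) hT0.le
  · rw [← Finset.sum_div, Finset.sum_comm, Finset.sum_congr rfl (fun t _ => (hpm t).2 w)]
    simp [hT0.ne']
  · have h1 := hsum a ha T
    have h2 : ∑ t ∈ Finset.range T, θ * ∑ k, c a k * (p t k - a k) =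
        θ * T * ∑ k, c a k * ((∑ t ∈ Finset.range T, p t k) / T - a k) := by
      rw [← Finset.mul_sum, mul_assoc, Finset.sum_comm]
      congr 1
      rw [Finset.mul_sum]
      refine Finset.sum_congr rfl fun k _ => ?_
      rw [← Finset.mul_sum, Finset.sum_sub_distrib]
      simp
      field_simp
    rw [h2] at h1
    have h3 : θ ^ 2 * C = θ * ε := by simp only [θ]; field_simp
    rw [h3] at h1
    have h4 : 0 < θ * T := by positivity
    refine le_of_mul_le_mul_left ?_ h4
    linarith

lemma exists_sol {ω : K → W} (hω : Function.Surjective ω) (c : (K → ℝ) → K → ℝ)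
    (hc : ContinuousOn c (Pset ω))
    (hmono : ∀ a ∈ Pset ω, ∀ b ∈ Pset ω, 0 ≤ ∑ k, (c b k - c a k) * (b k - a k)) :
    ∃ b ∈ Pset ω, ∀ a ∈ Pset ω, 0 ≤ ∑ k, c b k * (a k - b k) := by
  have hck : ∀ k, ContinuousOn (fun a => c a k) (Pset ω) := fun k =>
    (continuous_apply k).comp_continuousOn hc
  obtain ⟨C, hC⟩ := ((Pset_compact ω).image_of_continuousOn
    (f := fun a => ∑ k, (c a k) ^ 2)
    (continuousOn_finsetSum _ fun k _ => (hck k).pow 2)).bddAbove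
  have hC' : ∀ a ∈ Pset ω, ∑ k, (c a k) ^ 2 ≤ max C 1 := fun a ha =>
    (hC ⟨a, ha, rfl⟩).trans (le_max_left _ _)
  have hap := fun n : ℕ => exists_approx hω c (max C 1) (by positivity) hC' hmono
    (1 / ((n:ℝ) + 1)) (by positivity)
  choose b hb hba using hap
  obtain ⟨x, hx, φ, hφ, hlim⟩ := (Pset_compact ω).tendsto_subseq hb
  have hxk : ∀ k, Tendsto (fun n => b (φ n) k) atTop (𝓝 (x k)) := fun k =>
    (tendsto_pi_nhds.1 hlim) k
  have minty : ∀ a ∈ Pset ω, ∑ k, c a k * (x k - a k) ≤ 0 := by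
    intro a ha
    have h1 : Tendsto (fun n => ∑ k, c a k * (b (φ n) k - a k)) atTop
        (𝓝 (∑ k, c a k * (x k - a k))) :=
      tendsto_finsetSum _ fun k _ => ((hxk k).sub_const _).const_mul _
    have h2 : Tendsto (fun n => 1 / (((φ n : ℕ) : ℝ) + 1)) atTop (𝓝 0) :=
      (tendsto_one_div_add_atTop_nhds_zero_nat (𝕜 := ℝ)).comp hφ.tendsto_atTop
    exact le_of_tendsto_of_tendsto' h1 h2 fun n => hba (φ n) a ha
  refine ⟨x, hx, fun a ha => ?_⟩
  let l : ℕ → ℝ := fun n => 1 / ((n:ℝ) + 1)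
  have hl0 : ∀ n, 0 < l n := fun n => by simp only [l]; positivity
  have hl1 : ∀ n, l n ≤ 1 := fun n => by
    simp only [l]; rw [div_le_one (by positivity)]; linarith [Nat.cast_nonneg (α := ℝ) n]
  have hl : Tendsto l atTop (𝓝 0) := tendsto_one_div_add_atTop_nhds_zero_nat
  let y : ℕ → K → ℝ := fun n => (1 - l n) • x + l n • a
  have hy : ∀ n, y n ∈ Pset ω := fun n =>
    Pset_convex ω hx ha (by linarith [hl1 n]) (hl0 n).le (by ring)
  have hyx : Tendsto y atTop (𝓝 x) := by
    have := ((hl.const_sub 1).smul_const x).add (hl.smul_const a)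
    simpa using this
  have hyx' : Tendsto y atTop (𝓝[Pset ω] x) :=
    tendsto_nhdsWithin_iff.2 ⟨hyx, Eventually.of_forall hy⟩
  have h1 : Tendsto (fun n => ∑ k, c (y n) k * (a k - x k)) atTop
      (𝓝 (∑ k, c x k * (a k - x k))) :=
    tendsto_finsetSum _ fun k _ => ((hck k x hx).tendsto.comp hyx').mul_const _
  refine ge_of_tendsto' h1 fun n => ?_
  have h2 := minty (y n) (hy n)
  have h3 : ∑ k, c (y n) k * (x k - y n k) = - l n * ∑ k, c (y n) k * (a k - x k) := by
    rw [Finset.mul_sum]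
    refine Finset.sum_congr rfl fun k _ => ?_
    simp only [y, Pi.add_apply, Pi.smul_apply, smul_eq_mul]
    ring
  rw [h3] at h2
  by_contra hneg
  push Not at hneg
  nlinarith [hl0 n]

lemma dyn {ω : K → W} (hω : Function.Surjective ω) (c : (K → ℝ) → K → ℝ)
    (L : ℝ) (hL : 0 < L)
    (hcoco : ∀ a ∈ Pset ω, ∀ b ∈ Pset ω,
      (1 / (4 * L)) * ∑ k, (c b k - c a k) ^ 2 ≤ ∑ k, (c b k - c a k) * (b k - a k))
    (r : ℝ) (hr : 0 < r) (η : ℝ) (hη : 0 < η)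
    (s : ℕ → K → ℝ) (p : ℕ → K → ℝ) (hp : ∀ t, p t = logit ω r (s t))
    (hs : ∀ t, s (t + 1) = fun k => s t k + η * c (p t) k)
    (a : K → ℝ) (ha : a ∈ Pset ω) (hav : ∀ b ∈ Pset ω, 0 ≤ ∑ k, c a k * (b k - a k)) (t : ℕ) :
    KL a (p (t+1)) ≤ KL a (p t) - r * η * ((1 / (4 * L) - r * η / 2) *
      ∑ k, (c (p t) k - c a k) ^ 2 + ∑ k, c a k * (p (t+1) k - a k)) := by
  have hpm : ∀ t, p t ∈ Pset ω := fun t => by rw [hp]; exact logit_mem ω hω _ _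
  have hpp : ∀ t k, 0 < p t k := fun t k => by rw [hp]; exact logit_pos ω _ _ _
  have h1 := step hω r η (s t) (s (t+1)) (c (p t)) (fun k => by rw [hs]) a ha
  rw [← hp, ← hp] at h1
  have h2 := KL_ge (hpm (t+1)) (hpm t) (hpp t)
  have h3 := hcoco a ha (p t) (hpm t)
  have hre : 0 < r * η := by positivity
  set x : K → ℝ := fun k => c (p t) k - c a k with hx
  have h5 : ∑ k, c (p t) k * (a k - p (t+1) k) = - ∑ k, x k * (p t k - a k)
      - ∑ k, x k * (p (t+1) k - p t k) - ∑ k, c a k * (p (t+1) k - a k) := by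
    rw [← Finset.sum_neg_distrib, ← Finset.sum_sub_distrib, ← Finset.sum_sub_distrib]
    exact Finset.sum_congr rfl fun k _ => by simp only [hx]; ring
  have h6 : - (r * η * ∑ k, x k * (p (t+1) k - p t k)) ≤
      ∑ k, (p (t+1) k - p t k) ^ 2 / 2 + (r * η) ^ 2 / 2 * ∑ k, x k ^ 2 := by
    rw [Finset.mul_sum, Finset.mul_sum, ← Finset.sum_neg_distrib, ← Finset.sum_add_distrib]
    refine Finset.sum_le_sum fun k _ => ?_
    nlinarith [sq_nonneg (r * η * x k + (p (t+1) k - p t k))]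
  have h7 := mul_le_mul_of_nonneg_left h3 hre.le
  rw [h1, h5]
  change _ ≤ KL a (p t) - r * η * ((1 / (4 * L) - r * η / 2) *
      ∑ k, x k ^ 2 + ∑ k, c a k * (p (t+1) k - a k))
  change r * η * (1 / (4 * L) * ∑ k, x k ^ 2) ≤ r * η * ∑ k, x k * (p t k - a k) at h7
  have e : ∀ A B D X : ℝ, r * η * (-A - B - D) = -(r * η * A) + -(r * η * B) - r * η * D ∧
    r * η * ((1 / (4 * L) - r * η / 2) * X + D) = r * η * (1 / (4 * L) * X)
      - (r * η) ^ 2 / 2 * X + r * η * D := fun A B D X => ⟨by ring, by ring⟩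
  rw [(e _ _ _ 0).1, (e 0 0 _ _).2]
  linarith

lemma main {ω : K → W} (hω : Function.Surjective ω) (c : (K → ℝ) → K → ℝ)
    (hc : ContinuousOn c (Pset ω))
    (L : ℝ) (hL : 0 < L)
    (hcoco : ∀ a ∈ Pset ω, ∀ b ∈ Pset ω,
      (1 / (4 * L)) * ∑ k, (c b k - c a k) ^ 2 ≤ ∑ k, (c b k - c a k) * (b k - a k))
    (r : ℝ) (hr : 0 < r) (η : ℝ) (hη : 0 < η) (hηL : η < 1 / (2 * r * L))
    (s : ℕ → K → ℝ) (p : ℕ → K → ℝ) (hp : ∀ t, p t = logit ω r (s t))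
    (hs : ∀ t, s (t + 1) = fun k => s t k + η * c (p t) k) :
    ∃ b ∈ Pset ω, (∀ a ∈ Pset ω, 0 ≤ ∑ k, c b k * (a k - b k)) ∧ Tendsto p atTop (𝓝 b) := by
  have hpm : ∀ t, p t ∈ Pset ω := fun t => by rw [hp]; exact logit_mem ω hω _ _
  have hpp : ∀ t k, 0 < p t k := fun t k => by rw [hp]; exact logit_pos ω _ _ _
  have hck : ∀ k, ContinuousOn (fun a => c a k) (Pset ω) := fun k =>
    (continuous_apply k).comp_continuousOn hc
  have hre : 0 < r * η := by positivity
  set κ := 1 / (4 * L) - r * η / 2 with hκdef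
  have hκ : 0 < κ := by
    rw [lt_div_iff₀ (by positivity)] at hηL
    rw [hκdef, sub_pos, lt_div_iff₀ (by positivity)]
    linarith
  obtain ⟨a, ha, hav⟩ := exists_sol hω c hc (fun a ha b hb =>
    le_trans (mul_nonneg (by positivity) (Finset.sum_nonneg fun k _ => sq_nonneg _))
      (hcoco a ha b hb))
  have hd := dyn hω c L hL hcoco r hr η hη s p hp hs
  rw [← hκdef] at hd
  have hsq : ∀ a t, 0 ≤ ∑ k, (c (p t) k - c a k) ^ 2 := fun a t =>
    Finset.sum_nonneg fun k _ => sq_nonneg _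
  have hanti : ∀ a ∈ Pset ω, (∀ b ∈ Pset ω, 0 ≤ ∑ k, c a k * (b k - a k)) →
      Antitone fun t => KL a (p t) := by
    intro a ha hav
    refine antitone_nat_of_succ_le fun t => ?_
    have h1 := hd a ha hav t
    have h2 := hav _ (hpm (t+1))
    have h3 := mul_nonneg hre.le (add_nonneg (mul_nonneg hκ.le (hsq a t)) h2)
    linarith
  have hconv : ∀ a ∈ Pset ω, (∀ b ∈ Pset ω, 0 ≤ ∑ k, c a k * (b k - a k)) →
      ∃ l, Tendsto (fun t => KL a (p t)) atTop (𝓝 l) := by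
    intro a ha hav
    refine ⟨_, tendsto_atTop_ciInf (hanti a ha hav) ⟨0, ?_⟩⟩
    rintro _ ⟨t, rfl⟩
    exact KL_nonneg ha (hpm t) (hpp t)
  obtain ⟨l, hl⟩ := hconv a ha hav
  have hdiff : Tendsto (fun t => (KL a (p t) - KL a (p (t+1))) / (r * η)) atTop (𝓝 0) := by
    simpa using (hl.sub ((tendsto_add_atTop_iff_nat 1).2 hl)).div_const (r * η)
  have hdiff' : Tendsto (fun t => (KL a (p t) - KL a (p (t+1))) / (r * η) / κ) atTop (𝓝 0) := by
    simpa using hdiff.div_const κ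
  have hb1 : ∀ t, κ * ∑ k, (c (p t) k - c a k) ^ 2 + ∑ k, c a k * (p (t+1) k - a k) ≤
      (KL a (p t) - KL a (p (t+1))) / (r * η) := by
    intro t
    rw [le_div_iff₀ hre]
    linarith [hd a ha hav t]
  have hx0 : Tendsto (fun t => ∑ k, (c (p t) k - c a k) ^ 2) atTop (𝓝 0) := by
    refine squeeze_zero (hsq a) (fun t => ?_) hdiff'
    rw [le_div_iff₀ hκ]
    linarith [hb1 t, hav _ (hpm (t+1))]
  have hg0 : Tendsto (fun t => ∑ k, c a k * (p t k - a k)) atTop (𝓝 0) := by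
    rw [← tendsto_add_atTop_iff_nat 1]
    refine squeeze_zero (fun t => hav _ (hpm (t+1))) (fun t => ?_) hdiff
    linarith [hb1 t, mul_nonneg hκ.le (hsq a t)]
  obtain ⟨x, hx, φ, hφ, hlim⟩ := (Pset_compact ω).tendsto_subseq hpm
  have hxk : ∀ k, Tendsto (fun n => p (φ n) k) atTop (𝓝 (x k)) := fun k =>
    (tendsto_pi_nhds.1 hlim) k
  have hlim' : Tendsto (p ∘ φ) atTop (𝓝[Pset ω] x) :=
    tendsto_nhdsWithin_iff.2 ⟨hlim, Eventually.of_forall fun n => hpm (φ n)⟩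
  have hcx : ∀ k, c x k = c a k := by
    have h1 : Tendsto (fun n => ∑ k, (c (p (φ n)) k - c a k) ^ 2) atTop
        (𝓝 (∑ k, (c x k - c a k) ^ 2)) :=
      tendsto_finsetSum _ fun k _ =>
        (((hck k x hx).tendsto.comp hlim').sub_const (c a k)).pow 2
    have h2 := tendsto_nhds_unique h1 (hx0.comp hφ.tendsto_atTop)
    rw [Finset.sum_eq_zero_iff_of_nonneg (fun k _ => sq_nonneg _)] at h2
    intro k
    have := h2 k (Finset.mem_univ k)
    rw [sq_eq_zero_iff] at this
    linarith
  have hxa : ∑ k, c a k * (x k - a k) = 0 := by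
    have h1 : Tendsto (fun n => ∑ k, c a k * (p (φ n) k - a k)) atTop
        (𝓝 (∑ k, c a k * (x k - a k))) :=
      tendsto_finsetSum _ fun k _ => ((hxk k).sub_const _).const_mul _
    exact tendsto_nhds_unique h1 (hg0.comp hφ.tendsto_atTop)
  have hxv : ∀ b ∈ Pset ω, 0 ≤ ∑ k, c x k * (b k - x k) := by
    intro b hb
    have h1 : ∑ k, c x k * (b k - x k) =
        ∑ k, c a k * (b k - a k) - ∑ k, c a k * (x k - a k) := by
      rw [← Finset.sum_sub_distrib]
      exact Finset.sum_congr rfl fun k _ => by rw [hcx]; ring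
    rw [h1, hxa, sub_zero]
    exact hav b hb
  refine ⟨x, hx, hxv, ?_⟩
  obtain ⟨l', hl'⟩ := hconv x hx hxv
  have hKL0 : Tendsto (fun n => KL x (p (φ n))) atTop (𝓝 0) := by
    have h0 : KL x x = 0 := by simp [KL]
    rw [← h0]
    refine tendsto_finsetSum _ fun k _ => ?_
    refine Tendsto.const_sub _ ?_
    by_cases hk : x k = 0
    · simp [hk]
    · exact ((Real.continuousAt_log hk).tendsto.comp (hxk k)).const_mul _
  have hl0 : l' = 0 := tendsto_nhds_unique (hl'.comp hφ.tendsto_atTop) hKL0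
  rw [hl0] at hl'
  rw [tendsto_pi_nhds]
  intro k
  have h2 : Tendsto (fun t => 2 * KL x (p t)) atTop (𝓝 0) := by simpa using hl'.const_mul 2
  have h3 : Tendsto (fun t => (p t k - x k) ^ 2) atTop (𝓝 0) := by
    refine squeeze_zero (fun t => sq_nonneg _) (fun t => ?_) h2
    have h4 := KL_ge hx (hpm t) (hpp t)
    have h5 := Finset.single_le_sum (f := fun k => (x k - p t k) ^ 2 / 2)
      (fun i _ => by positivity) (Finset.mem_univ k)
    change (x k - p t k) ^ 2 / 2 ≤ _ at h5
    nlinarith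
  have h4 : Tendsto (fun t => p t k - x k) atTop (𝓝 0) := by
    rw [tendsto_zero_iff_abs_tendsto_zero]
    have h5 := (Real.continuous_sqrt.tendsto 0).comp h3
    simpa [Function.comp_def, Real.sqrt_sq_eq_abs] using h5
  simpa using h4.add_const (x k)

end

end CumLogAux

theorem stmt_8
    {W K E : Type*} [Fintype W] [Fintype K] [Fintype E]
    [DecidableEq W] [DecidableEq E]
    [Nonempty W] [Nonempty K]
    (ω : K → W) (hω : Function.Surjective ω)
    (Λ : E → K → ℝ) (hΛ : ∀ e k, Λ e k = 0 ∨ Λ e k = 1)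
    (d : W → ℝ) (hd : ∀ w, 0 < d w)
    (u : (E → ℝ) → (E → ℝ))
    (P : Set (K → ℝ))
    (hP : P = {p : K → ℝ | (∀ k, 0 ≤ p k) ∧
      ∀ w, ∑ k ∈ Finset.univ.filter (fun k => ω k = w), p k = 1})
    (Λbar : E → K → ℝ) (hΛbar : ∀ e k, Λbar e k = d (ω k) * Λ e k)
    (c : (K → ℝ) → K → ℝ)
    (hc : ∀ p k, c p k = ∑ e, Λ e k * u (fun e' => ∑ k', Λbar e' k' * p k') e)
    (X : Set (E → ℝ)) (hX : X = (fun p e => ∑ k, Λbar e k * p k) '' P)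
    (hu1 : ∃ U : Set (E → ℝ), IsOpen U ∧ X ⊆ U ∧ ContDiffOn ℝ 2 u U)
    (hu2 : ∀ x ∈ X,
      (∀ v : E → ℝ, 0 ≤ ∑ i, ∑ j, v i * (fderiv ℝ u x (Pi.single j (1 : ℝ)) i) * v j) ∧
      (∀ v : E → ℝ, 0 ≤ ∑ i, ∑ j,
        v i * (∑ m, fderiv ℝ u x (Pi.single m (1 : ℝ)) i *
          fderiv ℝ u x (Pi.single j (1 : ℝ)) m) * v j))
    (L : ℝ) (hL : 0 < L)
    (hcoco : ∀ a ∈ P, ∀ b ∈ P,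
      (1 / (4 * L)) * ∑ k, (c b k - c a k) ^ 2 ≤ ∑ k, (c b k - c a k) * (b k - a k))
    (q : ℝ → (K → ℝ) → K → ℝ)
    (hq : ∀ (rr : ℝ) (ss : K → ℝ) (k : K),
      q rr ss k = Real.exp (-rr * ss k) /
        ∑ k' ∈ Finset.univ.filter (fun k' => ω k' = ω k), Real.exp (-rr * ss k'))
    (Pstar : Set (K → ℝ))
    (hPstar : Pstar = {ps ∈ P | ∀ pp ∈ P, 0 ≤ ∑ k, c ps k * (pp k - ps k)})
    (r : ℝ) (hr : 0 < r)
    (ηc : ℝ) (hηc : 0 < ηc) (hηcL : ηc < 1 / (2 * r * L))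
    (s : ℕ → K → ℝ) (p : ℕ → K → ℝ)
    (hp : ∀ t, p t = q r (s t))
    (hs : ∀ t, s (t + 1) = fun k => s t k + ηc * c (p t) k) :
    ∃ pstar ∈ Pstar, Tendsto p atTop (nhds pstar) := by
  have hP' : P = CumLogAux.Pset ω := hP
  subst hP'
  have hcont : ContinuousOn c (CumLogAux.Pset ω) := by
    obtain ⟨U, _, hXU, hu⟩ := hu1
    have hmap : ContinuousOn (fun p : K → ℝ => u (fun e' => ∑ k', Λbar e' k' * p k'))
        (CumLogAux.Pset ω) := by
      refine hu.continuousOn.comp (f := fun (p : K → ℝ) (e : E) => ∑ k', Λbar e k' * p k')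
        (Continuous.continuousOn (by fun_prop)) ?_
      intro p hp
      apply hXU
      rw [hX]
      exact ⟨p, hp, rfl⟩
    rw [continuousOn_pi]
    intro k
    have : (fun p => c p k) =
        fun p => ∑ e, Λ e k * u (fun e' => ∑ k', Λbar e' k' * p k') e := by
      funext p; exact hc p k
    rw [this]
    exact continuousOn_finsetSum _ fun e _ =>
      continuousOn_const.mul ((continuous_apply e).comp_continuousOn hmap)
  have hp' : ∀ t, p t = CumLogAux.logit ω r (s t) := by
    intro t
    rw [hp]
    funext k
    rw [hq]
    rfl
  obtain ⟨b, hb, hbv, hlim⟩ := CumLogAux.main hω c hcont L hL hcoco r hr ηc hηc hηcL s p hp' hs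
  refine ⟨b, ?_, hlim⟩
  rw [hPstar]
  exact ⟨hb, hbv⟩
end

section
/- Let r > 0, η > 0, s ∈ ℝ^K, and p = q_r(s). If p is a fixed point of the CumLog update, i.e., q_r(s + η · c(p)) = p, then p ∈ P*; that is, ⟨c(p), p' − p⟩ ≥ 0 for all p' ∈ P, so p is a Wardrop equilibrium strategy. -/
open Finset Filter Topology

theorem stmt_11
    {W K E : Type*} [Fintype W] [Fintype K] [Fintype E]
    [DecidableEq W] [DecidableEq E]
    [Nonempty W] [Nonempty K]
    (ω : K → W) (hω : Function.Surjective ω)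
    (Λ : E → K → ℝ) (hΛ : ∀ e k, Λ e k = 0 ∨ Λ e k = 1)
    (d : W → ℝ) (hd : ∀ w, 0 < d w)
    (u : (E → ℝ) → (E → ℝ))
    (P : Set (K → ℝ))
    (hP : P = {p : K → ℝ | (∀ k, 0 ≤ p k) ∧
      ∀ w, ∑ k ∈ Finset.univ.filter (fun k => ω k = w), p k = 1})
    (Λbar : E → K → ℝ) (hΛbar : ∀ e k, Λbar e k = d (ω k) * Λ e k)
    (c : (K → ℝ) → K → ℝ)
    (hc : ∀ p k, c p k = ∑ e, Λ e k * u (fun e' => ∑ k', Λbar e' k' * p k') e)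
    (q : ℝ → (K → ℝ) → K → ℝ)
    (hq : ∀ (rr : ℝ) (ss : K → ℝ) (k : K),
      q rr ss k = Real.exp (-rr * ss k) /
        ∑ k' ∈ Finset.univ.filter (fun k' => ω k' = ω k), Real.exp (-rr * ss k'))
    (r : ℝ) (hr : 0 < r) (η : ℝ) (hη : 0 < η)
    (sv : K → ℝ)
    (hfix : q r (fun k => sv k + η * c (q r sv) k) = q r sv) :
    q r sv ∈ P ∧ ∀ pp ∈ P, 0 ≤ ∑ k, c (q r sv) k * (pp k - q r sv k) := by
  have hZ : ∀ (ss : K → ℝ) (w : W),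
      0 < ∑ k' ∈ Finset.univ.filter (fun k' => ω k' = w), Real.exp (-r * ss k') := by
    intro ss w
    obtain ⟨k, hk⟩ := hω w
    exact Finset.sum_pos (fun i _ => Real.exp_pos _) ⟨k, by simp [hk]⟩
  have hmem : q r sv ∈ P := by
    rw [hP]
    refine ⟨fun k => ?_, fun w => ?_⟩
    · rw [hq]
      exact div_nonneg (Real.exp_pos _).le (hZ sv _).le
    · have h1 : ∀ k ∈ Finset.univ.filter (fun k => ω k = w), q r sv k =
          Real.exp (-r * sv k) /
          ∑ k' ∈ Finset.univ.filter (fun k' => ω k' = w), Real.exp (-r * sv k') := by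
        intro k hk
        have hk' : ω k = w := by simpa using hk
        rw [hq, hk']
      rw [Finset.sum_congr rfl h1, ← Finset.sum_div]
      exact div_self (hZ sv w).ne'
  refine ⟨hmem, ?_⟩
  have hexp : ∀ k, Real.exp (-r * (η * c (q r sv) k)) =
      (∑ k' ∈ Finset.univ.filter (fun k' => ω k' = ω k),
        Real.exp (-r * (sv k' + η * c (q r sv) k'))) /
      ∑ k' ∈ Finset.univ.filter (fun k' => ω k' = ω k), Real.exp (-r * sv k') := by
    intro k
    have h := congrFun hfix k
    rw [hq r (fun k => sv k + η * c (q r sv) k) k] at h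
    have h2 := hq r sv k
    have hA := hZ (fun k => sv k + η * c (q r sv) k) (ω k)
    have hB := hZ sv (ω k)
    have h3 := h.trans h2
    rw [div_eq_div_iff hA.ne' hB.ne', mul_add, Real.exp_add, mul_assoc] at h3
    have h4 := mul_left_cancel₀ (Real.exp_pos _).ne' h3
    rw [eq_div_iff hB.ne']
    simpa only [mul_add] using h4
  have hconst : ∀ k k', ω k = ω k' → c (q r sv) k = c (q r sv) k' := by
    intro k k' h
    have h1 := hexp k
    rw [h, ← hexp k'] at h1
    have h2 := Real.exp_injective h1
    exact mul_left_cancel₀ hη.ne' (mul_left_cancel₀ (neg_ne_zero.mpr hr.ne') h2)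
  intro pp hpp
  rw [hP] at hpp hmem
  refine le_of_eq ?_
  symm
  rw [← Finset.sum_fiberwise Finset.univ ω]
  refine Finset.sum_eq_zero fun w _ => ?_
  obtain ⟨k0, hk0⟩ := hω w
  have h1 : ∀ k ∈ Finset.univ.filter (fun k => ω k = w),
      c (q r sv) k * (pp k - q r sv k) = c (q r sv) k0 * (pp k - q r sv k) := by
    intro k hk
    have hk' : ω k = w := by simpa using hk
    rw [hconst k k0 (hk'.trans hk0.symm)]
  rw [Finset.sum_congr rfl h1, ← Finset.mul_sum, Finset.sum_sub_distrib, hpp.2 w, hmem.2 w]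
  simp
end

section
/- Under Assumptions 1 and 2, let L > 0 be such that c is 1/(4L)-cocoercive on P, and suppose the CumLog dynamics are run with finite initial valuation s^0 ∈ ℝ^K and step sizes satisfying r η^t < 1/(2L) for all t ≥ 0. Then for every p* ∈ P*, the sequence D(p*, p^t) is nonincreasing in t (hence converges), and ‖p^t − p^{t+1}‖₂ → 0 as t → ∞. -/
open Finset Filter Topology

/-- Scalar inequality behind Pinsker's inequality. -/
lemma aux_log_ge (x : ℝ) (hx : 0 < x) :
    (x - 1) * (5 * x + 1) / (2 * x * (x + 2)) ≤ Real.log x := by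
  set h : ℝ → ℝ := fun x => Real.log x - (x - 1) * (5 * x + 1) / (2 * x * (x + 2)) with hh
  have hder : ∀ y : ℝ, 0 < y → HasDerivAt h ((y - 1) ^ 3 / (y ^ 2 * (y + 2) ^ 2)) y := by
    intro y hy
    have h1 : HasDerivAt (fun x : ℝ => (x - 1) * (5 * x + 1))
        (1 * (5 * y + 1) + (y - 1) * (5 * 1)) y :=
      ((hasDerivAt_id y).sub_const 1).mul (((hasDerivAt_id y).const_mul 5).add_const 1)
    have h2 : HasDerivAt (fun x : ℝ => 2 * x * (x + 2))
        (2 * 1 * (y + 2) + 2 * y * 1) y :=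
      ((hasDerivAt_id y).const_mul 2).mul ((hasDerivAt_id y).add_const 2)
    have h3 := (Real.hasDerivAt_log hy.ne').sub (h1.div h2 (by positivity))
    refine h3.congr_deriv ?_
    field_simp
    ring
  have hone : h 1 = 0 := by simp [hh]
  have key : 0 ≤ h x := by
    rcases le_total x 1 with hx1 | hx1
    · have hanti : AntitoneOn h (Set.Icc x 1) := by
        apply antitoneOn_of_deriv_nonpos (convex_Icc x 1)
        · intro y hy
          exact (hder y (hx.trans_le hy.1)).continuousAt.continuousWithinAt
        · intro y hy
          rw [interior_Icc] at hy
          exact (hder y (hx.trans hy.1)).differentiableAt.differentiableWithinAt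
        · intro y hy
          rw [interior_Icc] at hy
          rw [(hder y (hx.trans hy.1)).deriv]
          apply div_nonpos_of_nonpos_of_nonneg
          · have : y - 1 ≤ 0 := by linarith [hy.2]
            have h2 : (y - 1) ^ 3 = (y - 1) * (y - 1) ^ 2 := by ring
            rw [h2]
            exact mul_nonpos_of_nonpos_of_nonneg this (sq_nonneg _)
          · positivity
      have := hanti (Set.left_mem_Icc.2 hx1) (Set.right_mem_Icc.2 hx1) hx1
      linarith
    · have hmono : MonotoneOn h (Set.Icc 1 x) := by
        apply monotoneOn_of_deriv_nonneg (convex_Icc 1 x)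
        · intro y hy
          exact (hder y (one_pos.trans_le hy.1)).continuousAt.continuousWithinAt
        · intro y hy
          rw [interior_Icc] at hy
          exact (hder y (one_pos.trans hy.1)).differentiableAt.differentiableWithinAt
        · intro y hy
          rw [interior_Icc] at hy
          rw [(hder y (one_pos.trans hy.1)).deriv]
          have : 0 ≤ y - 1 := by linarith [hy.1]
          positivity
      have := hmono (Set.left_mem_Icc.2 hx1) (Set.right_mem_Icc.2 hx1) hx1
      linarith
  simp only [hh] at key
  linarith

lemma aux_kl_term (a b : ℝ) (ha : 0 < a) (hb : 0 < b) :
    3 / 2 * ((a - b) ^ 2 / (a + 2 * b)) ≤ a * (Real.log a - Real.log b) - a + b := by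
  have h := aux_log_ge (a / b) (by positivity)
  rw [Real.log_div ha.ne' hb.ne'] at h
  have h2 := mul_le_mul_of_nonneg_left h ha.le
  have h3 : a * ((a / b - 1) * (5 * (a / b) + 1) / (2 * (a / b) * (a / b + 2)))
      = 3 / 2 * ((a - b) ^ 2 / (a + 2 * b)) + a - b := by
    field_simp
    ring
  linarith

/-- Pinsker with the sharp Euclidean constant. -/
lemma aux_pinsker {K : Type*} (G : Finset K) (a b : K → ℝ)
    (ha : ∀ k ∈ G, 0 < a k) (hb : ∀ k ∈ G, 0 < b k)
    (hA : ∑ k ∈ G, a k = 1) (hB : ∑ k ∈ G, b k = 1) :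
    ∑ k ∈ G, (a k - b k) ^ 2 ≤ ∑ k ∈ G, a k * (Real.log (a k) - Real.log (b k)) := by
  classical
  have h1 : 3 / 2 * ∑ k ∈ G, ((a k - b k) ^ 2 / (a k + 2 * b k))
      ≤ ∑ k ∈ G, a k * (Real.log (a k) - Real.log (b k)) := by
    have : ∑ k ∈ G, (3 / 2 * ((a k - b k) ^ 2 / (a k + 2 * b k))) ≤
        ∑ k ∈ G, (a k * (Real.log (a k) - Real.log (b k)) - a k + b k) :=
      Finset.sum_le_sum fun k hk => aux_kl_term _ _ (ha k hk) (hb k hk)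
    rw [← Finset.mul_sum, Finset.sum_add_distrib, Finset.sum_sub_distrib, hA, hB] at this
    linarith
  have h2 := Finset.sq_sum_div_le_sum_sq_div G (fun k => |a k - b k|)
    (g := fun k => a k + 2 * b k) (fun k hk => by linarith [ha k hk, hb k hk])
  have h3 : ∑ k ∈ G, (a k + 2 * b k) = 3 := by
    rw [Finset.sum_add_distrib, ← Finset.mul_sum, hA, hB]; norm_num
  simp only [h3, sq_abs] at h2
  set N := ∑ k ∈ G, |a k - b k| with hN
  have h4 : ∀ k ∈ G, |a k - b k| ≤ N / 2 := by
    intro k hk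
    have e1 : ∑ j ∈ G, (a j - b j) = 0 := by rw [Finset.sum_sub_distrib, hA, hB]; ring
    rw [← Finset.add_sum_erase _ _ hk] at e1
    have e2 : N = |a k - b k| + ∑ j ∈ G.erase k, |a j - b j| :=
      (Finset.add_sum_erase _ _ hk).symm
    have e3 := Finset.abs_sum_le_sum_abs (fun j => a j - b j) (G.erase k)
    have e4 : |a k - b k| = |∑ j ∈ G.erase k, (a j - b j)| := by
      rw [eq_neg_of_add_eq_zero_left e1, abs_neg]
    linarith
  have h5 : ∑ k ∈ G, (a k - b k) ^ 2 ≤ N / 2 * N := by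
    rw [hN, Finset.mul_sum]
    refine Finset.sum_le_sum fun k hk => ?_
    rw [← sq_abs, sq]
    exact mul_le_mul_of_nonneg_right (h4 k hk) (abs_nonneg _)
  nlinarith

/-- Finite Minty: by separation. -/
lemma aux_minty_finite {K : Type*} [Fintype K] (P : Set (K → ℝ)) (hconv : Convex ℝ P)
    (hcomp : IsCompact P) (hne : P.Nonempty) (c : (K → ℝ) → K → ℝ)
    (hmono : ∀ a ∈ P, ∀ b ∈ P, 0 ≤ ∑ k, (c b k - c a k) * (b k - a k))
    {ι : Type*} [Fintype ι] (y : ι → K → ℝ) (hy : ∀ i, y i ∈ P) :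
    ∃ x ∈ P, ∀ i, ∑ k, c (y i) k * (x k - y i k) ≤ 0 := by
  classical
  by_contra hcon
  push Not at hcon
  set g : (K → ℝ) → ι → ℝ := fun x i => ∑ k, c (y i) k * (x k - y i k) with hg
  have hgc : Continuous g := by fun_prop
  have hBconv : Convex ℝ (g '' P) := by
    rintro _ ⟨x, hx, rfl⟩ _ ⟨x', hx', rfl⟩ α β hα hβ hαβ
    refine ⟨α • x + β • x', hconv hx hx' hα hβ hαβ, ?_⟩
    funext i
    simp only [hg, Pi.add_apply, Pi.smul_apply, smul_eq_mul, Finset.mul_sum]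
    rw [← Finset.sum_add_distrib]
    refine Finset.sum_congr rfl fun k _ => ?_
    linear_combination (c (y i) k * y i k) * hαβ
  have hAconv : Convex ℝ (Set.Iic (0 : ι → ℝ)) := convex_Iic 0
  have hdisj : Disjoint (Set.Iic (0 : ι → ℝ)) (g '' P) := by
    rw [Set.disjoint_left]
    rintro _ hz ⟨x, hx, rfl⟩
    obtain ⟨i, hi⟩ := hcon x hx
    exact absurd (hz i) (not_le.2 hi)
  obtain ⟨f, s, t, hfs, hst, hft⟩ := geometric_hahn_banach_closed_compact hAconv isClosed_Iic
    hBconv (hcomp.image hgc) hdisj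
  have hs0 : 0 < s := by simpa using hfs 0 (Set.mem_Iic.2 le_rfl)
  set l : ι → ℝ := fun i => f (Pi.single i 1) with hl
  have hfl : ∀ z, f z = ∑ i, z i * l i := by
    intro z
    conv_lhs => rw [pi_eq_sum_univ' z]
    simp only [map_sum, map_smul, smul_eq_mul, hl]
  have hl0 : ∀ i, 0 ≤ l i := by
    intro i
    by_contra hneg
    push Not at hneg
    have := hfs ((s / l i) • Pi.single i 1) (by
      intro j
      have : s / l i ≤ 0 := div_nonpos_of_nonneg_of_nonpos hs0.le hneg.le
      by_cases hj : j = i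
      · subst hj; simpa using this
      · simp [hj])
    rw [map_smul, smul_eq_mul] at this
    change s / l i * l i < s at this
    rw [div_mul_cancel₀ _ hneg.ne] at this
    exact lt_irrefl _ this
  have hpos : ∀ x ∈ P, 0 < ∑ i, g x i * l i := by
    intro x hx
    rw [← hfl]
    linarith [hft (g x) ⟨x, hx, rfl⟩]
  have hS : 0 < ∑ i, l i := by
    refine lt_of_le_of_ne (Finset.sum_nonneg fun i _ => hl0 i) fun h0 => ?_
    have h0' := (Finset.sum_eq_zero_iff_of_nonneg (fun i _ => hl0 i)).1 h0.symm
    obtain ⟨x, hx⟩ := hne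
    have := hpos x hx
    rw [Finset.sum_eq_zero (fun i hi => by rw [h0' i hi, mul_zero])] at this
    exact lt_irrefl _ this
  set S := ∑ i, l i with hSdef
  set x : K → ℝ := ∑ i, (l i / S) • y i with hx
  have hxP : x ∈ P := hconv.sum_mem (fun i _ => div_nonneg (hl0 i) hS.le)
    (by rw [← Finset.sum_div, div_self hS.ne']) (fun i _ => hy i)
  have h1 : ∑ i, g x i * l i ≤ ∑ i, (∑ k, c x k * (x k - y i k)) * l i := by
    refine Finset.sum_le_sum fun i _ => mul_le_mul_of_nonneg_right ?_ (hl0 i)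
    have := hmono (y i) (hy i) x hxP
    simp only [sub_mul, Finset.sum_sub_distrib] at this
    simp only [hg]
    linarith
  have h2 : ∑ i, (∑ k, c x k * (x k - y i k)) * l i = 0 := by
    simp only [Finset.sum_mul]
    rw [Finset.sum_comm]
    refine Finset.sum_eq_zero fun k _ => ?_
    have e1 : x k * S = ∑ i, l i * y i k := by
      simp only [hx, Finset.sum_apply, Pi.smul_apply, smul_eq_mul, Finset.sum_mul]
      refine Finset.sum_congr rfl fun i _ => ?_
      field_simp
    have e2 : ∑ i, c x k * (x k - y i k) * l i = c x k * (x k * S - ∑ i, l i * y i k) := by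
      rw [hSdef, Finset.mul_sum, ← Finset.sum_sub_distrib, Finset.mul_sum]
      refine Finset.sum_congr rfl fun i _ => ?_
      ring
    rw [e2, e1]; ring
  linarith [hpos x hxP]

/-- Existence of solutions of monotone variational inequalities. -/
lemma aux_vi_exists {K : Type*} [Fintype K] (P : Set (K → ℝ)) (hconv : Convex ℝ P)
    (hcomp : IsCompact P) (hne : P.Nonempty) (c : (K → ℝ) → K → ℝ) (hcont : ContinuousOn c P)
    (hmono : ∀ a ∈ P, ∀ b ∈ P, 0 ≤ ∑ k, (c b k - c a k) * (b k - a k)) :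
    ∃ x ∈ P, ∀ y ∈ P, 0 ≤ ∑ k, c x k * (y k - x k) := by
  classical
  have hM : (P ∩ ⋂ y : P, {x : K → ℝ | ∑ k, c y k * (x k - y.1 k) ≤ 0}).Nonempty := by
    apply hcomp.inter_iInter_nonempty
    · intro y
      exact isClosed_le (by fun_prop) continuous_const
    · intro F
      obtain ⟨x, hx, hx'⟩ := aux_minty_finite P hconv hcomp hne c hmono
        (fun i : F => (i.1 : K → ℝ)) (fun i => i.1.2)
      refine ⟨x, hx, ?_⟩
      simp only [Set.mem_iInter]
      intro i hi
      exact hx' ⟨i, hi⟩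
  obtain ⟨x, hx, hx'⟩ := hM
  simp only [Set.mem_iInter, Set.mem_setOf_eq] at hx'
  refine ⟨x, hx, fun y hy => ?_⟩
  set z : ℝ → K → ℝ := fun τ => x + τ • (y - x) with hz
  have hzP : ∀ τ ∈ Set.Icc (0 : ℝ) 1, z τ ∈ P := fun τ hτ =>
    hconv.add_smul_sub_mem hx hy hτ
  have hzc : Continuous z := by fun_prop
  have hz0 : z 0 = x := by simp [hz]
  have hcz : ContinuousOn (fun τ => c (z τ)) (Set.Icc 0 1) := hcont.comp hzc.continuousOn hzP
  have hF : ContinuousOn (fun τ => ∑ k, c (z τ) k * (y k - x k)) (Set.Icc 0 1) := by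
    refine continuousOn_finset_sum _ fun k _ => ?_
    exact ((continuous_apply k).comp_continuousOn hcz).mul continuousOn_const
  have ht : Tendsto (fun τ => ∑ k, c (z τ) k * (y k - x k)) (𝓝[Set.Ioc 0 1] 0)
      (𝓝 (∑ k, c x k * (y k - x k))) := by
    have := (hF 0 (by simp)).mono_left (nhdsWithin_mono 0 Set.Ioc_subset_Icc_self)
    simpa only [hz0] using this
  haveI : (𝓝[Set.Ioc (0 : ℝ) 1] 0).NeBot := by
    rw [nhdsWithin_Ioc_eq_nhdsGT one_pos]; infer_instance
  refine ge_of_tendsto ht ?_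
  filter_upwards [self_mem_nhdsWithin] with τ hτ
  have h1 := hx' ⟨z τ, hzP τ (Set.Ioc_subset_Icc_self hτ)⟩
  have h2 : ∑ k, c (z τ) k * (x k - z τ k) = -τ * ∑ k, c (z τ) k * (y k - x k) := by
    rw [Finset.mul_sum]
    refine Finset.sum_congr rfl fun k _ => ?_
    simp only [hz, Pi.add_apply, Pi.smul_apply, Pi.sub_apply, smul_eq_mul]
    ring
  simp only at h1
  rw [h2] at h1
  by_contra hneg
  push Not at hneg
  nlinarith [hτ.1]

theorem stmt_12
    {W K E : Type*} [Fintype W] [Fintype K] [Fintype E]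
    [DecidableEq W] [DecidableEq E]
    [Nonempty W] [Nonempty K]
    (ω : K → W) (hω : Function.Surjective ω)
    (Λ : E → K → ℝ) (hΛ : ∀ e k, Λ e k = 0 ∨ Λ e k = 1)
    (d : W → ℝ) (hd : ∀ w, 0 < d w)
    (u : (E → ℝ) → (E → ℝ))
    (P : Set (K → ℝ))
    (hP : P = {p : K → ℝ | (∀ k, 0 ≤ p k) ∧
      ∀ w, ∑ k ∈ Finset.univ.filter (fun k => ω k = w), p k = 1})
    (Λbar : E → K → ℝ) (hΛbar : ∀ e k, Λbar e k = d (ω k) * Λ e k)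
    (c : (K → ℝ) → K → ℝ)
    (hc : ∀ p k, c p k = ∑ e, Λ e k * u (fun e' => ∑ k', Λbar e' k' * p k') e)
    (X : Set (E → ℝ)) (hX : X = (fun p e => ∑ k, Λbar e k * p k) '' P)
    (hu1 : ∃ U : Set (E → ℝ), IsOpen U ∧ X ⊆ U ∧ ContDiffOn ℝ 2 u U)
    (hu2 : ∀ x ∈ X,
      (∀ v : E → ℝ, 0 ≤ ∑ i, ∑ j, v i * (fderiv ℝ u x (Pi.single j (1 : ℝ)) i) * v j) ∧
      (∀ v : E → ℝ, 0 ≤ ∑ i, ∑ j,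
        v i * (∑ m, fderiv ℝ u x (Pi.single m (1 : ℝ)) i *
          fderiv ℝ u x (Pi.single j (1 : ℝ)) m) * v j))
    (L : ℝ) (hL : 0 < L)
    (hcoco : ∀ a ∈ P, ∀ b ∈ P,
      (1 / (4 * L)) * ∑ k, (c b k - c a k) ^ 2 ≤ ∑ k, (c b k - c a k) * (b k - a k))
    (q : ℝ → (K → ℝ) → K → ℝ)
    (hq : ∀ (rr : ℝ) (ss : K → ℝ) (k : K),
      q rr ss k = Real.exp (-rr * ss k) /
        ∑ k' ∈ Finset.univ.filter (fun k' => ω k' = ω k), Real.exp (-rr * ss k'))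
    (Pstar : Set (K → ℝ))
    (hPstar : Pstar = {ps ∈ P | ∀ pp ∈ P, 0 ≤ ∑ k, c ps k * (pp k - ps k)})
    (D : (K → ℝ) → (K → ℝ) → ℝ)
    (hD : ∀ a b, D a b = ∑ k, a k * (Real.log (a k) - Real.log (b k)))
    (r : ℝ) (hr : 0 < r)
    (η : ℕ → ℝ) (hη : ∀ t, 0 < η t)
    (s : ℕ → K → ℝ) (p : ℕ → K → ℝ)
    (hp : ∀ t, p t = q r (s t))
    (hs : ∀ t, s (t + 1) = fun k => s t k + η t * c (p t) k)
    (hstep : ∀ t, r * η t < 1 / (2 * L)) :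
    (∀ pstar ∈ Pstar,
        Antitone (fun t => D pstar (p t)) ∧
        ∃ l : ℝ, Tendsto (fun t => D pstar (p t)) atTop (nhds l)) ∧
      Tendsto (fun t => Real.sqrt (∑ k, (p t k - p (t + 1) k) ^ 2)) atTop (nhds 0) := by
  classical
  have memP : ∀ a, a ∈ P ↔ (∀ k, 0 ≤ a k) ∧
      ∀ w, ∑ k ∈ Finset.univ.filter (fun k => ω k = w), a k = 1 := by
    intro a; rw [hP]; rfl
  -- group sums
  have hfib : ∀ f : K → ℝ, ∑ k, f k = ∑ w, ∑ k ∈ Finset.univ.filter (fun k => ω k = w), f k :=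
    fun f => (Finset.sum_fiberwise Finset.univ ω f).symm
  have hZpos : ∀ t k, 0 < ∑ k' ∈ Finset.univ.filter (fun k' => ω k' = ω k),
      Real.exp (-r * s t k') := by
    intro t k
    exact Finset.sum_pos (fun _ _ => Real.exp_pos _) ⟨k, by simp⟩
  have ppos : ∀ t k, 0 < p t k := by
    intro t k
    rw [hp, hq]
    exact div_pos (Real.exp_pos _) (hZpos t k)
  have pP : ∀ t, p t ∈ P := by
    intro t
    refine (memP _).2 ⟨fun k => (ppos t k).le, fun w => ?_⟩
    obtain ⟨k0, rfl⟩ := hω w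
    have : ∀ k ∈ Finset.univ.filter (fun k => ω k = ω k0), p t k = Real.exp (-r * s t k) /
        ∑ k' ∈ Finset.univ.filter (fun k' => ω k' = ω k0), Real.exp (-r * s t k') := by
      intro k hk
      rw [hp, hq, (Finset.mem_filter.1 hk).2]
    rw [Finset.sum_congr rfl this, ← Finset.sum_div, div_self (hZpos t k0).ne']
  set Z : ℕ → W → ℝ := fun t w => Real.log (∑ k' ∈ Finset.univ.filter (fun k' => ω k' = w),
      Real.exp (-r * s t k')) with hZ
  have hlog : ∀ t k, Real.log (p t k) = -r * s t k - Z t (ω k) := by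
    intro t k
    rw [hp, hq, Real.log_div (Real.exp_pos _).ne' (hZpos t k).ne', Real.log_exp]
  have hdiff : ∀ t k, Real.log (p (t + 1) k) - Real.log (p t k)
      = -(r * η t) * c (p t) k + (Z t (ω k) - Z (t + 1) (ω k)) := by
    intro t k
    rw [hlog, hlog, hs]
    ring
  have hortho : ∀ a ∈ P, ∀ b ∈ P, ∀ g : W → ℝ, ∑ k, (a k - b k) * g (ω k) = 0 := by
    intro a ha b hb g
    rw [hfib]
    refine Finset.sum_eq_zero fun w _ => ?_
    have : ∀ k ∈ Finset.univ.filter (fun k => ω k = w), (a k - b k) * g (ω k)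
        = (a k - b k) * g w := by
      intro k hk; rw [(Finset.mem_filter.1 hk).2]
    rw [Finset.sum_congr rfl this, ← Finset.sum_mul, Finset.sum_sub_distrib,
      ((memP a).1 ha).2 w, ((memP b).1 hb).2 w]
    ring
  -- three point identity
  have hthree : ∀ t, ∀ a ∈ P, D a (p (t + 1)) = D a (p t) - D (p (t + 1)) (p t)
      - r * η t * ∑ k, c (p t) k * (p (t + 1) k - a k) := by
    intro t a ha
    have h1 : D a (p t) - D a (p (t + 1)) - D (p (t + 1)) (p t)
        = ∑ k, (a k - p (t + 1) k) * (Real.log (p (t + 1) k) - Real.log (p t k)) := by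
      rw [hD, hD, hD, ← Finset.sum_sub_distrib, ← Finset.sum_sub_distrib]
      exact Finset.sum_congr rfl fun k _ => by ring
    have h2 : ∑ k, (a k - p (t + 1) k) * (Real.log (p (t + 1) k) - Real.log (p t k))
        = r * η t * ∑ k, c (p t) k * (p (t + 1) k - a k) := by
      have h3 := hortho a ha (p (t + 1)) (pP _) (fun w => Z t w - Z (t + 1) w)
      rw [Finset.mul_sum, ← sub_eq_zero, ← h3, ← Finset.sum_sub_distrib]
      refine Finset.sum_congr rfl fun k _ => ?_
      rw [hdiff]
      ring
    linarith
  have hpin : ∀ t, ∑ k, (p t k - p (t + 1) k) ^ 2 ≤ D (p (t + 1)) (p t) := by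
    intro t
    rw [hD, hfib, hfib (fun k => p (t + 1) k * _)]
    refine Finset.sum_le_sum fun w _ => ?_
    have := aux_pinsker (Finset.univ.filter (fun k => ω k = w)) (p (t + 1)) (p t)
      (fun k _ => ppos _ k) (fun k _ => ppos _ k) (((memP _).1 (pP _)).2 w)
      (((memP _).1 (pP _)).2 w)
    refine le_trans (le_of_eq ?_) this
    exact Finset.sum_congr rfl fun k _ => by ring
  -- descent
  have hdesc : ∀ ps ∈ Pstar, ∀ t, D ps (p (t + 1)) ≤ D ps (p t)
      - 1 / 2 * ∑ k, (p t k - p (t + 1) k) ^ 2 := by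
    intro ps hps t
    rw [hPstar] at hps
    obtain ⟨hpsP, hvi⟩ := hps
    have h0 := hthree t ps hpsP
    have h1 := hvi (p (t + 1)) (pP _)
    have h2 := hcoco ps hpsP (p t) (pP t)
    have h3 : -L * ∑ k, (p t k - p (t + 1) k) ^ 2 ≤
        (1 / (4 * L)) * ∑ k, (c (p t) k - c ps k) ^ 2
          + ∑ k, (c (p t) k - c ps k) * (p (t + 1) k - p t k) := by
      rw [Finset.mul_sum, Finset.mul_sum, ← Finset.sum_add_distrib]
      refine Finset.sum_le_sum fun k _ => ?_
      have e : (1 / (4 * L)) * (c (p t) k - c ps k) ^ 2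
          + (c (p t) k - c ps k) * (p (t + 1) k - p t k) - -L * (p t k - p (t + 1) k) ^ 2
          = 1 / (4 * L) * ((c (p t) k - c ps k) - 2 * L * (p t k - p (t + 1) k)) ^ 2 := by
        field_simp
        ring
      have : 0 ≤ 1 / (4 * L) * ((c (p t) k - c ps k) - 2 * L * (p t k - p (t + 1) k)) ^ 2 := by
        positivity
      linarith
    have h4 : ∑ k, c (p t) k * (p (t + 1) k - ps k)
        = ∑ k, (c (p t) k - c ps k) * (p t k - ps k)
          + ∑ k, (c (p t) k - c ps k) * (p (t + 1) k - p t k)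
          + ∑ k, c ps k * (p (t + 1) k - ps k) := by
      rw [← Finset.sum_add_distrib, ← Finset.sum_add_distrib]
      exact Finset.sum_congr rfl fun k _ => by ring
    have h5 : -L * ∑ k, (p t k - p (t + 1) k) ^ 2 ≤ ∑ k, c (p t) k * (p (t + 1) k - ps k) := by
      linarith
    have h6 := mul_le_mul_of_nonneg_left h5 (mul_pos hr (hη t)).le
    have h7 : r * η t * L ≤ 1 / 2 := by
      have := mul_le_mul_of_nonneg_right (hstep t).le hL.le
      have e : 1 / (2 * L) * L = 1 / 2 := by field_simp
      linarith
    have hN : 0 ≤ ∑ k, (p t k - p (t + 1) k) ^ 2 := Finset.sum_nonneg fun _ _ => sq_nonneg _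
    have h8 := mul_le_mul_of_nonneg_right h7 hN
    have h9 := hpin t
    nlinarith
  have hDnn : ∀ a ∈ P, ∀ t, 0 ≤ D a (p t) := by
    intro a ha t
    have h1 : ∑ k, (a k - p t k) = 0 := by
      simpa using hortho a ha (p t) (pP t) (fun _ => 1)
    rw [hD, ← h1]
    refine Finset.sum_le_sum fun k _ => ?_
    rcases (((memP a).1 ha).1 k).eq_or_lt with h | h
    · rw [← h]; simp [(ppos t k).le]
    · have := aux_kl_term (a k) (p t k) h (ppos t k)
      have h2 : 0 ≤ 3 / 2 * ((a k - p t k) ^ 2 / (a k + 2 * p t k)) := by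
        have := ppos t k
        positivity
      linarith
  have hmain : ∀ pstar ∈ Pstar, Antitone (fun t => D pstar (p t)) ∧
      ∃ l : ℝ, Tendsto (fun t => D pstar (p t)) atTop (nhds l) := by
    intro ps hps
    have hanti : Antitone (fun t => D ps (p t)) := by
      refine antitone_nat_of_succ_le fun t => ?_
      have hN : 0 ≤ ∑ k, (p t k - p (t + 1) k) ^ 2 := Finset.sum_nonneg fun _ _ => sq_nonneg _
      linarith [hdesc ps hps t]
    refine ⟨hanti, _, tendsto_atTop_ciInf hanti ⟨0, ?_⟩⟩
    rintro _ ⟨t, rfl⟩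
    have hpsP : ps ∈ P := by rw [hPstar] at hps; exact hps.1
    exact hDnn ps hpsP t
  refine ⟨hmain, ?_⟩
  -- existence of an equilibrium
  have hPconv : Convex ℝ P := by
    intro a ha b hb α β hα hβ hαβ
    rw [memP] at ha hb ⊢
    refine ⟨fun k => ?_, fun w => ?_⟩
    · have := ha.1 k
      have := hb.1 k
      simp only [Pi.add_apply, Pi.smul_apply, smul_eq_mul]
      positivity
    · simp only [Pi.add_apply, Pi.smul_apply, smul_eq_mul, Finset.sum_add_distrib,
        ← Finset.mul_sum, ha.2 w, hb.2 w]
      linarith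
  have hPclosed : IsClosed P := by
    have : P = (⋂ k, {a : K → ℝ | 0 ≤ a k}) ∩
        ⋂ w, {a : K → ℝ | ∑ k ∈ Finset.univ.filter (fun k => ω k = w), a k = 1} := by
      ext a; simp [memP]
    rw [this]
    refine IsClosed.inter (isClosed_iInter fun k => ?_) (isClosed_iInter fun w => ?_)
    · exact isClosed_le continuous_const (continuous_apply k)
    · exact isClosed_eq (by fun_prop) continuous_const
  have hPcomp : IsCompact P := by
    refine IsCompact.of_isClosed_subset (isCompact_Icc (a := (0 : K → ℝ)) (b := 1)) hPclosed ?_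
    intro a ha
    have ha' := (memP a).1 ha
    refine ⟨fun k => ha'.1 k, fun k => ?_⟩
    have := Finset.single_le_sum (f := a) (s := Finset.univ.filter (fun k' => ω k' = ω k))
      (fun i _ => ha'.1 i) (show k ∈ _ by simp)
    rw [ha'.2] at this
    exact this
  have hcont : ContinuousOn c P := by
    obtain ⟨U, -, hXU, hU⟩ := hu1
    have h1 : ContinuousOn (fun a : K → ℝ => u (fun e' => ∑ k', Λbar e' k' * a k')) P := by
      refine hU.continuousOn.comp (Continuous.continuousOn (by fun_prop)) ?_
      intro a ha
      apply hXU
      rw [hX]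
      exact ⟨a, ha, rfl⟩
    refine continuousOn_pi.2 fun k => ?_
    have : (fun a => c a k) = fun a => ∑ e, Λ e k * u (fun e' => ∑ k', Λbar e' k' * a k') e :=
      funext fun a => hc a k
    rw [this]
    refine continuousOn_finset_sum _ fun e _ => ?_
    exact continuousOn_const.mul ((continuous_apply e).comp_continuousOn h1)
  have hmono : ∀ a ∈ P, ∀ b ∈ P, 0 ≤ ∑ k, (c b k - c a k) * (b k - a k) := by
    intro a ha b hb
    refine le_trans ?_ (hcoco a ha b hb)
    have : 0 ≤ ∑ k, (c b k - c a k) ^ 2 := Finset.sum_nonneg fun _ _ => sq_nonneg _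
    positivity
  obtain ⟨ps, hpsP, hvi⟩ := aux_vi_exists P hPconv hPcomp ⟨_, pP 0⟩ c hcont hmono
  have hps : ps ∈ Pstar := by rw [hPstar]; exact ⟨hpsP, hvi⟩
  obtain ⟨-, l, hl⟩ := hmain ps hps
  have hl' : Tendsto (fun t => D ps (p (t + 1))) atTop (nhds l) :=
    hl.comp (tendsto_add_atTop_nat 1)
  have h2 : Tendsto (fun t => 2 * (D ps (p t) - D ps (p (t + 1)))) atTop (nhds 0) := by
    have := (hl.sub hl').const_mul 2
    simpa using this
  have h3 : Tendsto (fun t => ∑ k, (p t k - p (t + 1) k) ^ 2) atTop (nhds 0) := by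
    refine squeeze_zero (fun t => Finset.sum_nonneg fun _ _ => sq_nonneg _) (fun t => ?_) h2
    linarith [hdesc ps hps t]
  have h4 := (Real.continuous_sqrt.tendsto 0).comp h3
  rw [Real.sqrt_zero] at h4
  exact h4
end

section
/- Fix r > 0 and s^0 ∈ ℝ^K. Define Model I by p^0 = q_r(s^0), s^t = s^{t−1} + c(p^{t−1}), p^t = q_r(s^t) for t ≥ 1; and define Model II by ŝ^0 = s^0, p̂^0 = q_r(ŝ^0), ŝ^t = (1 − 1/(t+1)) · ŝ^{t−1} + (1/(t+1)) · c(p̂^{t−1}), p̂^t = q_{r(t+1)}(ŝ^t) for t ≥ 1. Then the two models generate identical route choice sequences: p^t = p̂^t for all t ≥ 0 (indeed ŝ^t = s^t/(t+1) for all t ≥ 0). -/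
open Finset Filter Topology

theorem stmt_14
    {W K E : Type*} [Fintype W] [Fintype K] [Fintype E]
    [DecidableEq W] [DecidableEq E]
    [Nonempty W] [Nonempty K]
    (ω : K → W) (hω : Function.Surjective ω)
    (Λ : E → K → ℝ) (hΛ : ∀ e k, Λ e k = 0 ∨ Λ e k = 1)
    (d : W → ℝ) (hd : ∀ w, 0 < d w)
    (u : (E → ℝ) → (E → ℝ))
    (P : Set (K → ℝ))
    (hP : P = {p : K → ℝ | (∀ k, 0 ≤ p k) ∧
      ∀ w, ∑ k ∈ Finset.univ.filter (fun k => ω k = w), p k = 1})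
    (Λbar : E → K → ℝ) (hΛbar : ∀ e k, Λbar e k = d (ω k) * Λ e k)
    (c : (K → ℝ) → K → ℝ)
    (hc : ∀ p k, c p k = ∑ e, Λ e k * u (fun e' => ∑ k', Λbar e' k' * p k') e)
    (q : ℝ → (K → ℝ) → K → ℝ)
    (hq : ∀ (rr : ℝ) (ss : K → ℝ) (k : K),
      q rr ss k = Real.exp (-rr * ss k) /
        ∑ k' ∈ Finset.univ.filter (fun k' => ω k' = ω k), Real.exp (-rr * ss k'))
    (r : ℝ) (hr : 0 < r) (s0 : K → ℝ)
    (sI pI sII pII : ℕ → K → ℝ)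
    (hsI0 : sI 0 = s0)
    (hpI : ∀ t, pI t = q r (sI t))
    (hsI : ∀ t, sI (t + 1) = fun k => sI t k + c (pI t) k)
    (hsII0 : sII 0 = s0)
    (hpII : ∀ t, pII t = q (r * ((t : ℝ) + 1)) (sII t))
    (hsII : ∀ t, sII (t + 1) = fun k =>
      (1 - 1 / ((t : ℝ) + 2)) * sII t k + (1 / ((t : ℝ) + 2)) * c (pII t) k) :
    (∀ t, pII t = pI t) ∧ ∀ t k, sII t k = sI t k / ((t : ℝ) + 1) := by
  have key : ∀ t, (∀ k, sII t k = sI t k / ((t : ℝ) + 1)) → pII t = pI t := by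
    intro t h
    have h1 : ((t : ℝ) + 1) ≠ 0 := by positivity
    have h2 : ∀ k, -(r * ((t : ℝ) + 1)) * sII t k = -r * sI t k := by
      intro k
      rw [h k]
      field_simp
    funext k
    rw [hpII, hpI, hq, hq]
    simp only [h2]
  have hs : ∀ t k, sII t k = sI t k / ((t : ℝ) + 1) := by
    intro t
    induction t with
    | zero => intro k; simp [hsI0, hsII0]
    | succ t ih =>
      intro k
      have h1 : ((t : ℝ) + 1) ≠ 0 := by positivity
      have h2 : ((t : ℝ) + 2) ≠ 0 := by positivity
      have h3 : (((t + 1 : ℕ) : ℝ) + 1) = (t : ℝ) + 2 := by push_cast; ring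
      rw [h3, hsII, hsI, key t ih]
      simp only [ih k]
      field_simp
      ring
  exact ⟨fun t => key t (hs t), hs⟩
end

section
/- Suppose the link cost function u is continuous, and consider the CumLog dynamics with finite initial valuation s^0 ∈ ℝ^K and strictly positive step sizes satisfying ∑_{t=0}^∞ η^t < ∞. Then the valuation sequence s^t converges to a finite limit s̄ ∈ ℝ^K, the strategy sequence p^t converges to q_r(s̄), and every component of the limiting strategy q_r(s̄) is strictly positive (i.e., every route is selected with positive probability in the limit). -/
open Finset Filter Topology

theorem stmt_15
    {W K E : Type*} [Fintype W] [Fintype K] [Fintype E]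
    [DecidableEq W] [DecidableEq E]
    [Nonempty W] [Nonempty K]
    (ω : K → W) (hω : Function.Surjective ω)
    (Λ : E → K → ℝ) (hΛ : ∀ e k, Λ e k = 0 ∨ Λ e k = 1)
    (d : W → ℝ) (hd : ∀ w, 0 < d w)
    (u : (E → ℝ) → (E → ℝ))
    (P : Set (K → ℝ))
    (hP : P = {p : K → ℝ | (∀ k, 0 ≤ p k) ∧
      ∀ w, ∑ k ∈ Finset.univ.filter (fun k => ω k = w), p k = 1})
    (Λbar : E → K → ℝ) (hΛbar : ∀ e k, Λbar e k = d (ω k) * Λ e k)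
    (c : (K → ℝ) → K → ℝ)
    (hc : ∀ p k, c p k = ∑ e, Λ e k * u (fun e' => ∑ k', Λbar e' k' * p k') e)
    (q : ℝ → (K → ℝ) → K → ℝ)
    (hq : ∀ (rr : ℝ) (ss : K → ℝ) (k : K),
      q rr ss k = Real.exp (-rr * ss k) /
        ∑ k' ∈ Finset.univ.filter (fun k' => ω k' = ω k), Real.exp (-rr * ss k'))
    (r : ℝ) (hr : 0 < r)
    (η : ℕ → ℝ) (hη : ∀ t, 0 < η t)
    (s : ℕ → K → ℝ) (p : ℕ → K → ℝ)
    (hp : ∀ t, p t = q r (s t))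
    (hs : ∀ t, s (t + 1) = fun k => s t k + η t * c (p t) k)
    (hu : Continuous u) (hηsum : Summable η) :
    ∃ sbar : K → ℝ, Tendsto s atTop (nhds sbar) ∧
      Tendsto p atTop (nhds (q r sbar)) ∧ ∀ k, 0 < q r sbar k := by
  have hpos : ∀ (ss : K → ℝ) (k : K),
      0 < ∑ k' ∈ Finset.univ.filter (fun k' => ω k' = ω k), Real.exp (-r * ss k') := by
    intro ss k
    exact Finset.sum_pos (fun i _ => Real.exp_pos _) ⟨k, by simp⟩
  have hqpos : ∀ (ss : K → ℝ) (k : K), 0 < q r ss k := by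
    intro ss k
    rw [hq]
    exact div_pos (Real.exp_pos _) (hpos ss k)
  have hqle : ∀ (ss : K → ℝ) (k : K), q r ss k ≤ 1 := by
    intro ss k
    rw [hq, div_le_one (hpos ss k)]
    exact Finset.single_le_sum (f := fun k' => Real.exp (-r * ss k'))
      (fun i _ => (Real.exp_pos _).le) (by simp)
  have hqcont : Continuous (q r) := by
    have h : q r = fun ss k => Real.exp (-r * ss k) /
        ∑ k' ∈ Finset.univ.filter (fun k' => ω k' = ω k), Real.exp (-r * ss k') := by
      funext ss k
      exact hq r ss k
    rw [h]
    refine continuous_pi fun k => Continuous.div (by fun_prop) (by fun_prop) ?_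
    intro ss
    exact (hpos ss k).ne'
  have hccont : Continuous c := by
    have h : c = fun p k => ∑ e, Λ e k * u (fun e' => ∑ k', Λbar e' k' * p k') e := by
      funext p k
      exact hc p k
    rw [h]
    have h2 : Continuous fun p : K → ℝ => u (fun e' => ∑ k', Λbar e' k' * p k') :=
      hu.comp (by fun_prop)
    refine continuous_pi fun k => continuous_finsetSum _ fun e _ => ?_
    exact continuous_const.mul ((continuous_apply e).comp h2)
  obtain ⟨M, hM⟩ := (isCompact_Icc (a := (0 : K → ℝ)) (b := 1)).exists_bound_of_continuousOn
    hccont.continuousOn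
  have hcau : CauchySeq s := by
    refine cauchySeq_of_dist_le_of_summable (fun t => η t * M) ?_ (hηsum.mul_right M)
    intro t
    have h1 : s (t + 1) = s t + η t • c (p t) := by
      rw [hs t]
      funext k
      simp
    have h2 : ‖c (p t)‖ ≤ M := by
      apply hM
      rw [hp t]
      exact ⟨fun k => (hqpos _ k).le, fun k => hqle _ k⟩
    rw [h1, dist_self_add_right, norm_smul, Real.norm_of_nonneg (hη t).le]
    exact mul_le_mul_of_nonneg_left h2 (hη t).le
  obtain ⟨sbar, hsbar⟩ := cauchySeq_tendsto_of_complete hcau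
  refine ⟨sbar, hsbar, ?_, hqpos sbar⟩
  have h : p = fun t => q r (s t) := funext hp
  rw [h]
  exact (hqcont.tendsto sbar).comp hsbar
end
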